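/- Let q > 1 be an odd integer and let d(q) denote the number of positive divisors of q. If the smallest prime factor of q is at least d(q), then the Erdős conjecture is true mod q. -/

import Mathlib

open Filter Topology Finset

/-- `f : ℕ → ℤ` is Erdősian mod `q`: periodic with period `q`, takes values `±1`
off multiples of `q`, and `0` on multiples of `q`. -/
def IsErdosian (q : ℕ) (f : ℕ → ℤ) : Prop :=
  (∀ n : ℕ, 1 ≤ n → f (n + q) = f n) ∧
  (∀ n : ℕ, 1 ≤ n → ¬ q ∣ n → f n = 1 ∨ f n = -1) ∧
  (∀ n : ℕ, 1 ≤ n → q ∣ n → f n = 0)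

/-- The Erdős conjecture is false mod `q`: there is an Erdősian function mod `q`
whose partial sums `∑_{n=1}^N f(n)/n` tend to `0`. -/
def ErdosConjectureFalse (q : ℕ) : Prop :=
  ∃ f : ℕ → ℤ, IsErdosian q f ∧
    Tendsto (fun N : ℕ => ∑ n ∈ Finset.Icc 1 N, (f n : ℝ) / n) atTop (nhds 0)

/-- The Erdős conjecture holds (is true) mod `q`. -/
def ErdosConjectureHolds (q : ℕ) : Prop := ¬ ErdosConjectureFalse q

/-!
Suppose `∑ f(n)/n = 0` for an Erdősian `f`. Its mean vanishes because the harmonic series diverges,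
and a discrete Fourier transform turns the sum into a linear form in the logarithms
`log (1 - ζ ^ a)` whose coefficients lie in the cyclotomic field of `ζ`. By Baker's theorem,
obtained from an auxiliary exponential polynomial by extrapolation of its zeros, one may apply field
embeddings to the coefficients while fixing the logarithms; hence `∑ f(un)/n = 0` for every `u`
prime to `q`. Decomposing `f` under the Dirichlet characters mod `q` and using `L(1, χ) ≠ 0` gives
Okada's criterion: `∑ f(m)/m = 0`, the sum extending over those `m` all of whose prime factors
divide `q`. Since `∑ 1/m = q/φ(q)` over these `m` and `f(q) = 0`, the term `m = 1` dominates as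
soon as `q ≤ 2φ(q)`, and this inequality follows from `d(q) ≤ minFac q`.
-/

open NumberField

section NumberFieldTools

universe u v

theorem mul_rpow_le_mul_of_abs_le {c C x y r : ℝ} (hc : |c| ≤ C) (hx : |x| ≤ y) (hy : 1 ≤ y)
    (hr₀ : 0 ≤ r) (hr₁ : r ≤ 1) : c * x ^ r ≤ C * y :=
  calc c * x ^ r ≤ |c| * |x ^ r| := (le_abs_self _).trans (abs_mul _ _).le
    _ ≤ C * |x| ^ r := by
      gcongr
      · exact (abs_nonneg c).trans hc
      · exact Real.abs_rpow_le_abs_rpow _ _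
    _ ≤ C * y := by
      gcongr
      · exact (abs_nonneg c).trans hc
      · calc |x| ^ r ≤ y ^ r := Real.rpow_le_rpow (abs_nonneg _) hx hr₀
          _ ≤ y ^ (1 : ℝ) := Real.rpow_le_rpow_of_exponent_le hy hr₁
          _ = y := Real.rpow_one y

theorem exists_siegel_constant (K : Type*) [Field K] [NumberField K] : ∃ C : ℝ, 1 ≤ C ∧
    ∀ (α : Type u) (β : Type v) [Fintype α] [Fintype β] (a : Matrix α β (𝓞 K)) (A : ℝ), a ≠ 0 →
      0 < Fintype.card α → 2 * Fintype.card α ≤ Fintype.card β → 1 ≤ A →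
      (∀ k l, house (a k l : K) ≤ A) →
      ∃ ξ : β → 𝓞 K, ξ ≠ 0 ∧ a.mulVec ξ = 0 ∧
        ∀ l, house (ξ l : K) ≤ C * (C * Fintype.card β * A) := by
  classical
  obtain ⟨c, hc⟩ : ∃ c : ℝ, ∀ (α : Type u) (β : Type v) [Fintype α] [Fintype β]
      (a : Matrix α β (𝓞 K)) (A : ℝ), a ≠ 0 →
      0 < Fintype.card α → Fintype.card α < Fintype.card β → (∀ k l, house (a k l : K) ≤ A) →
      ∃ ξ : β → 𝓞 K, ξ ≠ 0 ∧ a.mulVec ξ = 0 ∧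
        ∀ l, house (ξ l : K) ≤ c * ((c * Fintype.card β * A) ^
          ((Fintype.card α : ℝ) / (Fintype.card β - Fintype.card α))) :=
    ⟨_, fun α β _ _ a A ha hpos hlt hA ↦
      house.exists_ne_zero_int_vec_house_le K a ha hpos hlt rfl hA rfl⟩
  refine ⟨max 1 |c|, le_max_left _ _, fun α β _ _ a A ha hpos hcard hA1 hA ↦ ?_⟩
  obtain ⟨ξ, hξ, haξ, hbound⟩ := hc α β a A ha hpos (by omega) hA
  refine ⟨ξ, hξ, haξ, fun l ↦ (hbound l).trans ?_⟩
  have hcard' : (2 : ℝ) * Fintype.card α ≤ Fintype.card β := mod_cast hcard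
  have hpos' : (0 : ℝ) < Fintype.card α := mod_cast hpos
  have hβ : (1 : ℝ) ≤ Fintype.card β := mod_cast (by omega : 1 ≤ Fintype.card β)
  refine mul_rpow_le_mul_of_abs_le (le_max_right _ _) ?_ ?_
    (div_nonneg hpos'.le (by linarith)) ((div_le_one (by linarith)).2 (by linarith))
  · rw [abs_mul, abs_mul, abs_of_nonneg (zero_le_one.trans hβ),
      abs_of_nonneg (zero_le_one.trans hA1)]
    gcongr
    exact le_max_right _ _
  · exact one_le_mul_of_one_le_of_one_le
      (one_le_mul_of_one_le_of_one_le (le_max_left _ _) hβ) hA1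

variable {K : Type*} [Field K] [NumberField K]

theorem one_le_norm_mul_house_pow (σ : K →+* ℂ) {x : 𝓞 K} (hx : x ≠ 0) :
    1 ≤ ‖σ x‖ * house (x : K) ^ (Module.finrank ℚ K - 1) := by
  refine le_trans ?_ (norm_norm_le_norm_mul_house_pow (x : K) σ)
  have hnorm : Algebra.norm ℤ x ≠ 0 := Algebra.norm_ne_zero_iff.mpr hx
  rw [← Algebra.coe_norm_int x]
  have : (1 : ℝ) ≤ |Algebra.norm ℤ x| := mod_cast Int.one_le_abs hnorm
  simpa [Int.norm_eq_abs] using this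

theorem house_finsetProd_le {ι : Type*} (s : Finset ι) (f : ι → K) :
    house (∏ i ∈ s, f i) ≤ ∏ i ∈ s, house (f i) := by
  classical
  induction s using Finset.induction_on with
  | empty => simpa using (house_intCast (K := K) 1).le
  | insert i s hi ih =>
    rw [prod_insert hi, prod_insert hi]
    refine (house_mul_le _ _).trans ?_
    gcongr
    exact house_nonneg _

theorem eq_zero_of_norm_le_exp_of_house_le_exp (σ : K →+* ℂ) {x : 𝓞 K} {Y Z : ℝ}
    (hhouse : house (x : K) ≤ Real.exp Z) (hnorm : ‖σ x‖ ≤ Real.exp (Z - Y))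
    (hYZ : Module.finrank ℚ K * Z < Y) : x = 0 := by
  by_contra hx
  have hD : 1 ≤ Module.finrank ℚ K := Module.finrank_pos
  refine (one_le_norm_mul_house_pow σ hx).not_gt ?_
  calc ‖σ x‖ * house (x : K) ^ (Module.finrank ℚ K - 1)
      ≤ Real.exp (Z - Y) * Real.exp Z ^ (Module.finrank ℚ K - 1) := by
        have := house_nonneg (x : K)
        gcongr
    _ = Real.exp (Module.finrank ℚ K * Z - Y) := by
        rw [← Real.exp_nat_mul, ← Real.exp_add, Nat.cast_sub hD]
        congr 1
        push_cast
        ring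
    _ < 1 := Real.exp_lt_one_iff.2 (by linarith)

end NumberFieldTools

section SchwarzLemma

theorem exists_eq_pow_sub_mul_of_le_analyticOrderAt {f : ℂ → ℂ} (hf : Differentiable ℂ f) {a : ℂ}
    {M : ℕ} (h : (M : ℕ∞) ≤ analyticOrderAt f a) :
    ∃ g : ℂ → ℂ, Differentiable ℂ g ∧ ∀ z, f z = (z - a) ^ M * g z := by
  induction M generalizing f with
  | zero => exact ⟨f, hf, by simp⟩
  | succ M ih =>
    have hfa : f a = 0 := by
      refine apply_eq_zero_of_analyticOrderAt_ne_zero fun h₀ ↦ ?_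
      simp [h₀] at h
    have hslope : Differentiable ℂ (dslope f a) := by
      rw [← differentiableOn_univ] at hf ⊢
      exact (Complex.differentiableOn_dslope univ_mem).2 hf
    have hmul : ∀ z, f z = (z - a) * dslope f a z := fun z ↦ by
      simpa [hfa] using (sub_smul_dslope f a z).symm
    have horder : analyticOrderAt f a = 1 + analyticOrderAt (dslope f a) a := by
      conv_lhs => rw [show f = (fun z ↦ z - a) * dslope f a from funext hmul]
      rw [analyticOrderAt_mul (by fun_prop) (hslope.analyticAt a),
        analyticOrderAt_id_sub_const_self]
    rw [horder, Nat.cast_succ, add_comm, ENat.add_le_add_iff_left (by simp)] at h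
    obtain ⟨g, hg, hfg⟩ := ih hslope h
    exact ⟨g, hg, fun z ↦ by rw [hmul, hfg, pow_succ']; ring⟩

theorem exists_eq_prod_pow_sub_mul_of_le_analyticOrderAt {f : ℂ → ℂ} (hf : Differentiable ℂ f)
    {s : Finset ℂ} {M : ℕ} (h : ∀ a ∈ s, (M : ℕ∞) ≤ analyticOrderAt f a) :
    ∃ g : ℂ → ℂ, Differentiable ℂ g ∧ ∀ z, f z = (∏ a ∈ s, (z - a) ^ M) * g z := by
  induction s using Finset.induction_on generalizing f with
  | empty => exact ⟨f, hf, by simp⟩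
  | insert a s ha ih =>
    obtain ⟨g, hg, hfg⟩ := exists_eq_pow_sub_mul_of_le_analyticOrderAt hf (h a (by simp))
    have horder : ∀ b ∈ s, (M : ℕ∞) ≤ analyticOrderAt g b := by
      intro b hb
      have hfb := h b (mem_insert_of_mem hb)
      have hne : analyticOrderAt (fun z : ℂ ↦ (z - a) ^ M) b = 0 := by
        rw [AnalyticAt.analyticOrderAt_eq_zero (by fun_prop)]
        exact pow_ne_zero _ (sub_ne_zero.2 (ne_of_mem_of_not_mem hb ha))
      rwa [show f = (fun z ↦ (z - a) ^ M) * g from funext hfg,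
        analyticOrderAt_mul (by fun_prop) (hg.analyticAt _), hne, zero_add] at hfb
    obtain ⟨k, hk, hgk⟩ := ih hg horder
    exact ⟨k, hk, fun z ↦ by rw [hfg, hgk, prod_insert ha]; ring⟩

theorem norm_le_mul_pow_of_le_analyticOrderAt {f : ℂ → ℂ} (hf : Differentiable ℂ f)
    {s : Finset ℂ} {M : ℕ} (horder : ∀ a ∈ s, (M : ℕ∞) ≤ analyticOrderAt f a) {R : ℝ} (hR : 0 < R)
    (hs : ∀ a ∈ s, ‖a‖ ≤ R) {B : ℝ} (hB : ∀ z : ℂ, ‖z‖ ≤ 7 * R → ‖f z‖ ≤ B) {w : ℂ}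
    (hw : ‖w‖ ≤ R) : ‖f w‖ ≤ B * (1 / 3) ^ (M * #s) := by
  obtain ⟨g, hg, hfg⟩ := exists_eq_prod_pow_sub_mul_of_le_analyticOrderAt hf horder
  have hg_sphere : ∀ z ∈ frontier (Metric.ball (0 : ℂ) (7 * R)),
      ‖g z‖ ≤ B / (6 * R) ^ (M * #s) := by
    intro z hz
    rw [frontier_ball _ (by positivity), mem_sphere_zero_iff_norm] at hz
    rw [le_div_iff₀ (by positivity), mul_comm]
    calc (6 * R) ^ (M * #s) * ‖g z‖ ≤ (∏ a ∈ s, ‖(z - a) ^ M‖) * ‖g z‖ := by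
          rw [pow_mul, ← prod_const]
          gcongr with a ha
          rw [norm_pow]
          gcongr
          linarith [norm_sub_norm_le z a, hs a ha]
      _ = ‖f z‖ := by rw [hfg z, norm_mul, norm_prod]
      _ ≤ B := hB z hz.le
  have hw_mem : w ∈ closure (Metric.ball (0 : ℂ) (7 * R)) :=
    subset_closure (mem_ball_zero_iff.2 (by linarith))
  calc ‖f w‖ = (∏ a ∈ s, ‖(w - a) ^ M‖) * ‖g w‖ := by rw [hfg w, norm_mul, norm_prod]
    _ ≤ (2 * R) ^ (M * #s) * (B / (6 * R) ^ (M * #s)) := by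
      gcongr
      · rw [pow_mul, ← prod_const]
        gcongr with a ha
        rw [norm_pow]
        gcongr
        linarith [norm_sub_le w a, hs a ha]
      · exact Complex.norm_le_of_forall_mem_frontier_norm_le Metric.isBounded_ball
          hg.diffContOnCl hg_sphere hw_mem
    _ = B * (1 / 3) ^ (M * #s) := by
      rw [show (6 : ℝ) * R = 3 * (2 * R) by ring, mul_pow 3, div_pow, one_pow]
      field_simp

theorem one_third_pow_le_exp_neg (n : ℕ) : (1 / 3 : ℝ) ^ n ≤ Real.exp (-n) := by
  rw [Real.exp_neg, ← Real.exp_one_pow, ← inv_pow, one_div]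
  gcongr
  exact Real.exp_one_lt_three.le

theorem norm_natCast_le_mul_exp_of_iteratedDeriv_eq_zero {f : ℂ → ℂ} (hf : Differentiable ℂ f)
    {S S' M : ℕ} (hS : S ≤ S') (hS' : 0 < S')
    (hzero : ∀ l < S, ∀ i < M, iteratedDeriv i f (l : ℂ) = 0) {B : ℝ}
    (hB : ∀ z : ℂ, ‖z‖ ≤ 7 * S' → ‖f z‖ ≤ B) {l : ℕ} (hl : l < S') :
    ‖f l‖ ≤ B * Real.exp (-(M * S)) := by
  have horder : ∀ a ∈ (range S).image ((↑) : ℕ → ℂ), (M : ℕ∞) ≤ analyticOrderAt f a := by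
    simp only [forall_mem_image, mem_range]
    intro l hl
    rw [natCast_le_analyticOrderAt_iff_iteratedDeriv_eq_zero (hf.analyticAt _)]
    exact hzero l hl
  have hnorm : ∀ a ∈ (range S).image ((↑) : ℕ → ℂ), ‖a‖ ≤ S' := by
    simp only [forall_mem_image, mem_range, Complex.norm_natCast, Nat.cast_le]
    exact fun l hl ↦ hl.le.trans hS
  have hschwarz := norm_le_mul_pow_of_le_analyticOrderAt hf horder (Nat.cast_pos.2 hS') hnorm hB
    (w := l) (by simpa using hl.le)
  rw [card_image_of_injective _ Nat.cast_injective, card_range] at hschwarz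
  have hB₀ : 0 ≤ B := (norm_nonneg _).trans (hB 0 (by simp))
  refine hschwarz.trans ?_
  gcongr
  exact_mod_cast one_third_pow_le_exp_neg (M * S)

end SchwarzLemma

section ZeroEstimate

theorem sum_fiber_eq_zero_of_sum_mul_pow_eq_zero {F ι : Type*} [Field F] [DecidableEq F]
    {s : Finset ι} {c x : ι → F} {N : ℕ} (hN : #(s.image x) ≤ N)
    (h : ∀ l < N, ∑ u ∈ s, c u * x u ^ l = 0) {u₀ : ι} (hu₀ : u₀ ∈ s) :
    ∑ u ∈ s with x u = x u₀, c u = 0 := by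
  have hx₀ : x u₀ ∈ s.image x := mem_image_of_mem x hu₀
  set P := Lagrange.basis (s.image x) id (x u₀)
  have hdeg : P.natDegree < N := by
    rw [Lagrange.natDegree_basis Function.injective_id.injOn hx₀]
    have := card_pos.2 ⟨_, hx₀⟩
    omega
  have heval : ∀ u ∈ s, P.eval (x u) = if x u = x u₀ then 1 else 0 := by
    intro u hu
    split_ifs with hux
    · rw [hux]
      exact Lagrange.eval_basis_self Function.injective_id.injOn hx₀
    · exact Lagrange.eval_basis_of_ne (v := id) (Ne.symm hux) (mem_image_of_mem x hu)
  calc ∑ u ∈ s with x u = x u₀, c u = ∑ u ∈ s, c u * P.eval (x u) := by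
        rw [sum_filter]
        refine sum_congr rfl fun u hu ↦ ?_
        rw [heval u hu, mul_ite, mul_one, mul_zero]
    _ = ∑ l ∈ range N, P.coeff l * ∑ u ∈ s, c u * x u ^ l := by
        simp only [Polynomial.eval_eq_sum_range' hdeg, mul_sum]
        rw [sum_comm]
        exact sum_congr rfl fun l _ ↦ sum_congr rfl fun u _ ↦ mul_left_comm _ _ _
    _ = 0 := sum_eq_zero fun l hl ↦ by rw [h l (mem_range.1 hl), mul_zero]

theorem card_le_of_exp_eq_of_norm_le {s : Finset ℂ} {w₀ : ℂ} {W : ℕ} (hw₀ : ‖w₀‖ ≤ W)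
    (hexp : ∀ w ∈ s, Complex.exp w = Complex.exp w₀) (hnorm : ∀ w ∈ s, ‖w‖ ≤ W) :
    #s ≤ 2 * W + 1 := by
  have hsub : s ⊆ (Icc (-W : ℤ) W).image fun k : ℤ ↦ w₀ + k * (2 * Real.pi * Complex.I) := by
    intro w hw
    obtain ⟨k, hk⟩ := Complex.exp_eq_exp_iff_exists_int.1 (hexp w hw)
    have hdiff : |(k : ℝ)| * (2 * Real.pi) ≤ 2 * W := by
      calc |(k : ℝ)| * (2 * Real.pi) = ‖w - w₀‖ := by simp [hk, abs_of_pos Real.pi_pos]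
        _ ≤ 2 * W := (norm_sub_le _ _).trans (by linarith [hnorm w hw])
    have hkW : |(k : ℝ)| ≤ W := by nlinarith [Real.pi_gt_three, abs_nonneg (k : ℝ)]
    exact mem_image.2 ⟨k, mem_Icc.2 (abs_le.1 (mod_cast hkW)), hk.symm⟩
  calc #s ≤ #(Icc (-W : ℤ) W) := (card_le_card hsub).trans card_image_le
    _ = 2 * W + 1 := by simp; omega

theorem eq_zero_of_sum_mul_pow_mul_exp_eq_zero {ι : Type*} [Fintype ι] {c w : ι → ℂ}
    (hw : Function.Injective w) {W S T : ℕ} (hW : ∀ u, ‖w u‖ ≤ W) (hT : 2 * W + 1 ≤ T)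
    (hS : Fintype.card ι ≤ S)
    (h : ∀ l < S, ∀ k < T, ∑ u, c u * w u ^ k * Complex.exp (w u * l) = 0) : c = 0 := by
  classical
  ext u₀
  set s : Finset ι := {u | Complex.exp (w u) = Complex.exp (w u₀)}
  have hmoments : ∀ k < T, ∑ u ∈ s, c u * w u ^ k = 0 := fun k hk ↦
    sum_fiber_eq_zero_of_sum_mul_pow_eq_zero (c := fun u ↦ c u * w u ^ k)
      (x := fun u ↦ Complex.exp (w u)) (card_image_le.trans hS)
      (fun l hl ↦ by simpa only [mul_comm (w _) (l : ℂ), Complex.exp_nat_mul] using h l hl k hk)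
      (mem_univ u₀)
  have hcard : #(s.image w) ≤ T := by
    refine (card_le_of_exp_eq_of_norm_le (hW u₀) ?_ ?_).trans hT
    · simp [s]
    · exact forall_mem_image.2 fun u _ ↦ hW u
  have hfiber := sum_fiber_eq_zero_of_sum_mul_pow_eq_zero hcard hmoments
    (mem_filter.2 ⟨mem_univ u₀, rfl⟩)
  have hsingle : ({u ∈ s | w u = w u₀} : Finset ι) = {u₀} := by
    ext u
    simp only [s, mem_filter, mem_univ, true_and, mem_singleton, hw.eq_iff]
    exact ⟨And.right, fun hu ↦ ⟨by rw [hu], hu⟩⟩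
  simpa [hsingle] using hfiber

end ZeroEstimate

section AuxiliaryFunction

universe u v

variable {K : Type*} [Field K] {κ : Type u} [Fintype κ]

/-- A family of exponents `∑ i, σ (coord u i) * ℓ i`, indexed by `u : ι`, that are combinations of
`ℓ` with coefficients algebraic integers of `K` (embedded in `ℂ` by `σ`) and whose exponentials are
again algebraic integers of `K`. These are the exponents of Baker's auxiliary functions. -/
structure FrequencyFamily (σ : K →+* ℂ) (ℓ : κ → ℂ) (ι : Type v) where
  coord : ι → κ → 𝓞 K
  expValue : ι → 𝓞 K
  exp_sum : ∀ u, Complex.exp (∑ i, σ (coord u i) * ℓ i) = σ (expValue u)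

namespace FrequencyFamily

variable {σ : K →+* ℂ} {ℓ : κ → ℂ} {ι : Type v} (F : FrequencyFamily σ ℓ ι)

/-- The complex exponent with index `u`. -/
noncomputable def freq (u : ι) : ℂ := ∑ i, σ (F.coord u i) * ℓ i

/-- The monomial `∏ i, coord u i ^ τ i`, the coefficient that the multi-derivative `τ` in Baker's
auxiliary function of several variables produces at the index `u`. -/
noncomputable def monomial (τ : κ → ℕ) (u : ι) : 𝓞 K := ∏ i, F.coord u i ^ τ i

/-- Common bound for the sizes of the coordinates, of the logarithms of the exponential values, and
of the exponents. -/
structure SizeLE [NumberField K] (B : ℝ) : Prop where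
  house_coord : ∀ u i, house (F.coord u i : K) ≤ B
  house_expValue : ∀ u, house (F.expValue u : K) ≤ Real.exp B
  norm_freq : ∀ u, ‖F.freq u‖ ≤ B

theorem exp_freq (u : ι) : Complex.exp (F.freq u) = σ (F.expValue u) := F.exp_sum u

theorem monomial_update_succ [DecidableEq κ] (τ : κ → ℕ) (j : κ) (u : ι) :
    F.monomial (Function.update τ j (τ j + 1)) u = F.monomial τ u * F.coord u j := by
  simp only [monomial]
  rw [← mul_prod_erase univ _ (mem_univ j),
    ← mul_prod_erase univ (fun i ↦ F.coord u i ^ τ i) (mem_univ j), Function.update_self, pow_succ,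
    prod_congr rfl fun i hi ↦ by rw [Function.update_of_ne (ne_of_mem_erase hi)]]
  ring

section Size

variable {F} [NumberField K] {B : ℝ} {S T : ℕ} {τ : κ → ℕ}

theorem SizeLE.house_monomial_le (hF : F.SizeLE B) (hB : 1 ≤ B) (hτ : ∀ i, τ i ≤ T) (u : ι) :
    house (F.monomial τ u : K) ≤ B ^ (Fintype.card κ * T) := by
  simp only [monomial, map_prod, map_pow]
  calc house (∏ i, (F.coord u i : K) ^ τ i) ≤ ∏ _i : κ, B ^ T := by
        refine (house_finsetProd_le _ _).trans (prod_le_prod (fun _ _ ↦ house_nonneg _) ?_)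
        intro i _
        calc house ((F.coord u i : K) ^ τ i) ≤ B ^ τ i :=
              (house_pow_le _ _).trans (pow_le_pow_left₀ (house_nonneg _) (hF.house_coord u i) _)
          _ ≤ B ^ T := pow_le_pow_right₀ hB (hτ i)
    _ = B ^ (Fintype.card κ * T) := by rw [prod_const, card_univ, ← pow_mul, mul_comm]

theorem SizeLE.house_coeff_le (hF : F.SizeLE B) (hB : 1 ≤ B) (hτ : ∀ i, τ i ≤ T) {l : ℕ}
    (hl : l ≤ S) (u : ι) : house (F.monomial τ u * F.expValue u ^ l : K) ≤
      B ^ (Fintype.card κ * T) * Real.exp (B * S) := by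
  refine (house_mul_le _ _).trans ?_
  gcongr
  · exact house_nonneg _
  · exact hF.house_monomial_le hB hτ u
  · calc house ((F.expValue u : K) ^ l) ≤ Real.exp B ^ l :=
          (house_pow_le _ _).trans (pow_le_pow_left₀ (house_nonneg _) (hF.house_expValue u) _)
      _ ≤ Real.exp B ^ S := pow_le_pow_right₀ (Real.one_le_exp (by linarith)) hl
      _ = Real.exp (B * S) := by rw [← Real.exp_nat_mul, mul_comm]

end Size

variable [Fintype ι] (p : ι → 𝓞 K)

/-- The algebraic integer that is the value at the natural number `l` of the derivative of index
`τ` of the auxiliary function with coefficients `p`. -/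
noncomputable def value (τ : κ → ℕ) (l : ℕ) : 𝓞 K :=
  ∑ u, F.monomial τ u * F.expValue u ^ l * p u

/-- The `k`-th derivative of the exponential polynomial
`∑ u, p u * monomial τ u * exp (freq u * z)`. -/
noncomputable def auxFun (τ : κ → ℕ) (k : ℕ) (z : ℂ) : ℂ :=
  ∑ u, σ (p u * F.monomial τ u) * F.freq u ^ k * Complex.exp (F.freq u * z)

/-- Vanishing of all the values at `0, …, S - 1` of the derivatives of order less than `T` in each
variable. -/
def VanishesTo (S T : ℕ) : Prop := ∀ l < S, ∀ τ : κ → ℕ, (∀ i, τ i < T) → F.value p τ l = 0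

theorem auxFun_zero_natCast (τ : κ → ℕ) (l : ℕ) : F.auxFun p τ 0 l = σ (F.value p τ l) := by
  simp only [auxFun, value, map_sum, map_mul, map_pow]
  refine sum_congr rfl fun u _ ↦ ?_
  rw [mul_comm (F.freq u), Complex.exp_nat_mul, exp_freq]
  ring

theorem hasDerivAt_auxFun (τ : κ → ℕ) (k : ℕ) (z : ℂ) :
    HasDerivAt (F.auxFun p τ k) (F.auxFun p τ (k + 1) z) z := by
  refine HasDerivAt.fun_sum fun u _ ↦ ?_
  refine ((((hasDerivAt_id z).const_mul (F.freq u)).cexp).const_mul _).congr_deriv ?_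
  simp only [id_eq]
  ring

theorem iteratedDeriv_auxFun (τ : κ → ℕ) (k : ℕ) :
    iteratedDeriv k (F.auxFun p τ 0) = F.auxFun p τ k := by
  induction k with
  | zero => rw [iteratedDeriv_zero]
  | succ k ih =>
    rw [iteratedDeriv_succ, ih]
    exact funext fun z ↦ (F.hasDerivAt_auxFun p τ k z).deriv

theorem auxFun_succ [DecidableEq κ] (τ : κ → ℕ) (k : ℕ) (z : ℂ) :
    F.auxFun p τ (k + 1) z = ∑ j, ℓ j * F.auxFun p (Function.update τ j (τ j + 1)) k z := by
  simp only [auxFun, mul_sum]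
  rw [sum_comm]
  refine sum_congr rfl fun u _ ↦ ?_
  simp only [monomial_update_succ, map_mul]
  rw [pow_succ]
  nth_rw 2 [freq]
  simp only [mul_sum, sum_mul]
  exact sum_congr rfl fun j _ ↦ by ring

variable {F p} {S S' T T₀ : ℕ}

theorem VanishesTo.auxFun_eq_zero (h : F.VanishesTo p S T) {l : ℕ} (hl : l < S) {k : ℕ}
    {τ : κ → ℕ} (hτ : ∀ i, τ i + k < T) : F.auxFun p τ k l = 0 := by
  classical
  induction k generalizing τ with
  | zero => simpa [auxFun_zero_natCast] using h l hl τ hτ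
  | succ k ih =>
    rw [auxFun_succ]
    refine sum_eq_zero fun j _ ↦ ?_
    rw [ih, mul_zero]
    intro i
    have := hτ i
    obtain rfl | hij := eq_or_ne i j
    · rw [Function.update_self]
      omega
    · rw [Function.update_of_ne hij]
      omega

variable [NumberField K] {B P X : ℝ}

theorem SizeLE.house_value_le (hF : F.SizeLE B) (hB : 1 ≤ B)
    (hp : ∀ u, house (p u : K) ≤ P)
    (hX : Fintype.card ι * (P * B ^ (Fintype.card κ * T)) ≤ Real.exp X) {τ : κ → ℕ}
    (hτ : ∀ i, τ i ≤ T) {l : ℕ} (hl : l ≤ S) :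
    house (F.value p τ l : K) ≤ Real.exp (X + B * S) := by
  simp only [value, map_sum, map_mul, map_pow]
  calc house (∑ u, (F.monomial τ u * F.expValue u ^ l * p u : K))
      ≤ ∑ _u : ι, B ^ (Fintype.card κ * T) * Real.exp (B * S) * P := by
        refine (house_sum_le_sum_house _ _).trans (sum_le_sum fun u _ ↦ ?_)
        refine (house_mul_le _ _).trans ?_
        gcongr
        · exact house_nonneg _
        · exact hF.house_coeff_le hB hτ hl u
        · exact hp u
    _ = Fintype.card ι * (P * B ^ (Fintype.card κ * T)) * Real.exp (B * S) := by
        rw [sum_const, card_univ, nsmul_eq_mul]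
        ring
    _ ≤ Real.exp (X + B * S) := by
        rw [Real.exp_add]
        gcongr

theorem SizeLE.norm_auxFun_zero_le (hF : F.SizeLE B) (hB : 1 ≤ B)
    (hp : ∀ u, house (p u : K) ≤ P)
    (hX : Fintype.card ι * (P * B ^ (Fintype.card κ * T)) ≤ Real.exp X) {τ : κ → ℕ}
    (hτ : ∀ i, τ i ≤ T) {r : ℝ} {z : ℂ} (hz : ‖z‖ ≤ r) :
    ‖F.auxFun p τ 0 z‖ ≤ Real.exp (X + B * r) := by
  calc ‖F.auxFun p τ 0 z‖ ≤ ∑ _u : ι, P * B ^ (Fintype.card κ * T) * Real.exp (B * r) := by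
        refine norm_sum_le_of_le _ fun u _ ↦ ?_
        rw [pow_zero, mul_one, norm_mul, map_mul, norm_mul]
        have hP : 0 ≤ P := (house_nonneg _).trans (hp u)
        gcongr
        · exact (norm_embedding_le_house _ _).trans (hp u)
        · exact (norm_embedding_le_house _ _).trans (hF.house_monomial_le hB hτ u)
        · refine (Complex.norm_exp_le_exp_norm _).trans (Real.exp_le_exp.2 ?_)
          rw [norm_mul]
          gcongr
          exact hF.norm_freq u
    _ = Fintype.card ι * (P * B ^ (Fintype.card κ * T)) * Real.exp (B * r) := by
        rw [sum_const, card_univ, nsmul_eq_mul]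
        ring
    _ ≤ Real.exp (X + B * r) := by
        rw [Real.exp_add]
        gcongr

theorem VanishesTo.extrapolate (hF : F.SizeLE B) (hB : 1 ≤ B)
    (hp : ∀ u, house (p u : K) ≤ P)
    (hX : Fintype.card ι * (P * B ^ (Fintype.card κ * T)) ≤ Real.exp X) (hS : S ≤ S') (hS' : 0 < S')
    (hnum : Module.finrank ℚ K * (X + B * (7 * S')) < T₀ * S) (h : F.VanishesTo p S (T + T₀)) :
    F.VanishesTo p S' T := by
  intro l hl τ hτ
  have hτ' : ∀ i, τ i ≤ T := fun i ↦ (hτ i).le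
  have hsmall : ‖F.auxFun p τ 0 l‖ ≤ Real.exp (X + B * (7 * S')) * Real.exp (-(T₀ * S)) := by
    refine norm_natCast_le_mul_exp_of_iteratedDeriv_eq_zero
      (fun z ↦ (F.hasDerivAt_auxFun p τ 0 z).differentiableAt) hS hS' (fun j hj i hi ↦ ?_)
      (fun z hz ↦ hF.norm_auxFun_zero_le hB hp hX hτ' hz) hl
    rw [iteratedDeriv_auxFun]
    exact h.auxFun_eq_zero hj fun a ↦ by have := hτ a; omega
  rw [auxFun_zero_natCast, ← Real.exp_add, ← sub_eq_add_neg] at hsmall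
  refine eq_zero_of_norm_le_exp_of_house_le_exp σ ?_ hsmall hnum
  refine (hF.house_value_le hB hp hX hτ' hl.le).trans (Real.exp_le_exp.2 ?_)
  gcongr
  linarith [(Nat.cast_nonneg S' : (0 : ℝ) ≤ S')]

theorem VanishesTo.iterate (hF : F.SizeLE B) (hB : 1 ≤ B)
    (hp : ∀ u, house (p u : K) ≤ P)
    (hX : Fintype.card ι * (P * B ^ (Fintype.card κ * T)) ≤ Real.exp X) (hX₀ : 0 ≤ X)
    {g : ℕ} (hg : 1 ≤ g) (hnum : Module.finrank ℚ K * (X + B * (7 * g ^ 2)) < T₀ * g) {j k : ℕ}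
    (hk : k * T₀ ≤ T) (h : F.VanishesTo p (g ^ (j + 1)) ((k + 1) * T₀)) :
    F.VanishesTo p (g ^ (j + 1 + k)) T₀ := by
  induction k generalizing j with
  | zero => simpa using h
  | succ k ih =>
    rw [show j + 1 + (k + 1) = j + 1 + 1 + k by ring]
    refine ih ((Nat.mul_le_mul_right _ k.le_succ).trans hk) ?_
    rw [add_mul _ 1, one_mul] at h
    have hg' : (1 : ℝ) ≤ g := mod_cast hg
    refine h.extrapolate hF hB hp (X := X) (hX.trans' ?_) (Nat.pow_le_pow_right hg (by omega))
      (by positivity) ?_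
    · rcases isEmpty_or_nonempty ι with hι | ⟨⟨u⟩⟩
      · simp
      · have hP : 0 ≤ P := (house_nonneg _).trans (hp u)
        gcongr
    · push_cast
      calc Module.finrank ℚ K * (X + B * (7 * (g : ℝ) ^ (j + 1 + 1)))
          ≤ Module.finrank ℚ K * (X * g ^ j + B * (7 * (g : ℝ) ^ (j + 1 + 1))) := by
            gcongr
            exact le_mul_of_one_le_right hX₀ (one_le_pow₀ hg')
        _ = Module.finrank ℚ K * (X + B * (7 * g ^ 2)) * g ^ j := by ring
        _ < T₀ * g * g ^ j := by gcongr
        _ = T₀ * (g : ℝ) ^ (j + 1) := by ring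

variable (σ ℓ) in
theorem exists_siegel_constant_vanishesTo : ∃ C : ℝ, 1 ≤ C ∧
    ∀ (ι : Type v) [Fintype ι] (F : FrequencyFamily σ ℓ ι) (B : ℝ), F.SizeLE B → 1 ≤ B →
      ∀ S T : ℕ, 0 < S → 0 < T → 2 * (T ^ Fintype.card κ * S) ≤ Fintype.card ι →
      ∃ p : ι → 𝓞 K, p ≠ 0 ∧ F.VanishesTo p S T ∧ ∀ u, house (p u : K) ≤
        C * (C * Fintype.card ι * (B ^ (Fintype.card κ * T) * Real.exp (B * S))) := by
  classical
  obtain ⟨C, hC, hsiegel⟩ := exists_siegel_constant.{u, v} K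
  refine ⟨C, hC, fun ι _ F B hF hB S T hS hT hcard ↦ ?_⟩
  let a : Matrix ((κ → Fin T) × Fin S) ι (𝓞 K) := fun x u ↦
    F.monomial (fun i ↦ x.1 i) u * F.expValue u ^ (x.2 : ℕ)
  have hrows : Fintype.card ((κ → Fin T) × Fin S) = T ^ Fintype.card κ * S := by
    simp
  have hι : Nonempty ι := Fintype.card_pos_iff.1 (hcard.trans_lt' (by positivity))
  have ha : a ≠ 0 := by
    obtain ⟨u⟩ := hι
    intro h
    simpa [a, monomial] using congrFun₂ h (fun _ ↦ ⟨0, hT⟩, ⟨0, hS⟩) u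
  have hA : 1 ≤ B ^ (Fintype.card κ * T) * Real.exp (B * S) :=
    one_le_mul_of_one_le_of_one_le (one_le_pow₀ hB) (Real.one_le_exp (by positivity))
  obtain ⟨p, hp, hvanish, hhouse⟩ := hsiegel _ ι a _ ha (by rw [hrows]; positivity)
    (by rwa [hrows]) hA fun x u ↦ by
      simpa [a] using hF.house_coeff_le hB (fun i ↦ (x.1 i).2.le) x.2.2.le u
  exact ⟨p, hp, fun l hl τ hτ ↦ congrFun hvanish (fun i ↦ ⟨τ i, hτ i⟩, ⟨l, hl⟩), hhouse⟩

theorem VanishesTo.eq_zero {B : ℕ} (hF : F.SizeLE B) (hinj : Function.Injective F.freq)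
    (hT : 2 * B + 1 ≤ T) (hS : Fintype.card ι ≤ S) (h : F.VanishesTo p S T) : p = 0 := by
  have hzero : (fun u ↦ σ (p u)) = 0 := by
    refine eq_zero_of_sum_mul_pow_mul_exp_eq_zero hinj hF.norm_freq hT hS fun l hl k hk ↦ ?_
    simpa [auxFun, monomial] using h.auxFun_eq_zero hl (τ := 0) (k := k) (by simpa using fun _ ↦ hk)
  ext u
  simpa using congrFun hzero u

variable (σ ℓ) in
theorem exists_const_not_injective_freq : ∃ C : ℝ, 1 ≤ C ∧
    ∀ (ι : Type v) [Fintype ι] (F : FrequencyFamily σ ℓ ι) (B : ℕ), F.SizeLE B → 1 ≤ B →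
      ∀ g k T₀ : ℕ, 1 ≤ g → 2 * (((k + 1) * T₀) ^ Fintype.card κ * g) ≤ Fintype.card ι →
      2 * B + 1 ≤ T₀ → Fintype.card ι ≤ g ^ (k + 1) →
      Module.finrank ℚ K *
        (2 * Real.log (C * Fintype.card ι * B ^ (Fintype.card κ * ((k + 1) * T₀))) + B * g +
          B * (7 * g ^ 2)) < T₀ * g →
      ¬ Function.Injective F.freq := by
  obtain ⟨C, hC, hsiegel⟩ := exists_siegel_constant_vanishesTo σ ℓ
  refine ⟨C, hC, fun ι _ F B hF hB g k T₀ hg hcard hT₀ hcard' hnum hinj ↦ ?_⟩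
  have hB' : (1 : ℝ) ≤ B := mod_cast hB
  have hT₁ : 0 < (k + 1) * T₀ := Nat.mul_pos k.succ_pos (by omega)
  obtain ⟨p, hp, hvanish, hhouse⟩ := hsiegel ι F B hF hB' g _ hg hT₁ hcard
  set L := C * Fintype.card ι * B ^ (Fintype.card κ * ((k + 1) * T₀)) with hL
  have hL₁ : 1 ≤ L := by
    have hι : 1 ≤ Fintype.card ι := hcard.trans' (Nat.succ_le_of_lt (by positivity))
    exact one_le_mul_of_one_le_of_one_le
      (one_le_mul_of_one_le_of_one_le hC (mod_cast hι)) (one_le_pow₀ hB')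
  have hexp : Real.exp (2 * Real.log L + B * g) = L * L * Real.exp (B * g) := by
    rw [two_mul, Real.exp_add, Real.exp_add, Real.exp_log (by positivity)]
  refine hp (VanishesTo.eq_zero hF hinj hT₀ hcard' ?_)
  rw [add_comm k 1, ← zero_add 1]
  refine VanishesTo.iterate hF hB' hhouse (T := (k + 1) * T₀) (X := 2 * Real.log L + B * g)
    ?_ ?_ hg hnum (Nat.mul_le_mul_right _ k.le_succ) ?_
  · rw [hexp, hL]
    exact le_of_eq (by ring)
  · have := Real.log_nonneg hL₁
    positivity
  · simpa using hvanish

end FrequencyFamily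

end AuxiliaryFunction

section BakerParameters

theorem eventually_add_mul_log_lt (a b : ℝ) : ∀ᶠ g : ℕ in atTop, a + b * Real.log g < g := by
  have hlittle : (fun x : ℝ ↦ a + b * Real.log x) =o[atTop] (id : ℝ → ℝ) :=
    (Asymptotics.isLittleO_const_left.2 (Or.inr tendsto_norm_atTop_atTop)).add
      (Real.isLittleO_log_id_atTop.const_mul_left b)
  filter_upwards [tendsto_natCast_atTop_atTop.eventually (hlittle.def one_half_pos),
    eventually_gt_atTop 0] with g hg hpos
  have hpos' : (0 : ℝ) < g := mod_cast hpos
  have := (le_abs_self _).trans hg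
  simp only [id, Real.norm_eq_abs, abs_of_pos hpos'] at this
  linarith

theorem two_mul_pow_mul_le_pow_pow {g k m n : ℕ} (hmn : m < n) (hg : 2 * (k + 1) ^ m ≤ g) :
    2 * (((k + 1) * g ^ (2 * n + 2)) ^ m * g) ≤ (g ^ (2 * n)) ^ n := by
  have hg₀ : 1 ≤ g := hg.trans' (Nat.succ_le_of_lt (by positivity))
  calc 2 * (((k + 1) * g ^ (2 * n + 2)) ^ m * g)
      = 2 * (k + 1) ^ m * g ^ ((2 * n + 2) * m + 1) := by rw [mul_pow, ← pow_mul]; ring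
    _ ≤ g * g ^ ((2 * n + 2) * m + 1) := by gcongr
    _ = g ^ ((2 * n + 2) * m + 2) := (pow_succ' _ _).symm
    _ ≤ g ^ (2 * n * n) := Nat.pow_le_pow_right hg₀ (by
        obtain ⟨d, rfl⟩ := Nat.exists_eq_add_of_lt hmn
        nlinarith [Nat.zero_le (d * d), Nat.zero_le (m * d)])
    _ = (g ^ (2 * n)) ^ n := pow_mul _ _ _

theorem two_mul_mul_pow_add_one_le {g c n : ℕ} (hg : 2 * c + 1 ≤ g) :
    2 * (c * g ^ (2 * n)) + 1 ≤ g ^ (2 * n + 2) :=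
  calc 2 * (c * g ^ (2 * n)) + 1 ≤ 2 * (c * g ^ (2 * n)) + g ^ (2 * n) := by
        gcongr
        exact Nat.one_le_pow _ _ (by omega)
    _ = (2 * c + 1) * g ^ (2 * n) := by ring
    _ ≤ g ^ 2 * g ^ (2 * n) := by
        gcongr
        nlinarith
    _ = g ^ (2 * n + 2) := by ring

theorem log_siegel_le {g c m n k : ℕ} (hg : 1 ≤ g) (hc : 1 ≤ c) {C : ℝ} (hC : 1 ≤ C) :
    Real.log (C * ↑((g ^ (2 * n)) ^ n) *
        (↑(c * g ^ (2 * n)) : ℝ) ^ (m * ((k + 1) * g ^ (2 * n + 2))))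
      ≤ g ^ (2 * n + 2) * (Real.log C + m * (k + 1) * Real.log c +
        (2 * n * n + m * (k + 1) * (2 * n)) * Real.log g) := by
  have hg' : (1 : ℝ) ≤ g := mod_cast hg
  have hlogC := Real.log_nonneg hC
  have hT : (1 : ℝ) ≤ g ^ (2 * n + 2) := one_le_pow₀ hg'
  push_cast
  rw [Real.log_mul (by positivity) (by positivity), Real.log_mul (by positivity) (by positivity),
    Real.log_pow, Real.log_pow, Real.log_pow, Real.log_mul (by positivity) (by positivity),
    Real.log_pow]
  push_cast
  have hextra : Real.log C + 2 * n * n * Real.log g ≤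
      g ^ (2 * n + 2) * (Real.log C + 2 * n * n * Real.log g) :=
    le_mul_of_one_le_left (by positivity) hT
  linarith

theorem eventually_baker_parameters {m n c : ℕ} (D : ℕ) (hc : 1 ≤ c) {C : ℝ}
    (hC : 1 ≤ C) : ∀ᶠ g : ℕ in atTop, D * (2 * Real.log (C * ↑((g ^ (2 * n)) ^ n) *
        (↑(c * g ^ (2 * n)) : ℝ) ^ (m * ((2 * n * n + 1) * g ^ (2 * n + 2)))) +
      ↑(c * g ^ (2 * n)) * g + ↑(c * g ^ (2 * n)) * (7 * g ^ 2)) <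
        ↑(g ^ (2 * n + 2)) * (g : ℝ) := by
  set k := 2 * n * n
  set a : ℝ := Real.log C + m * (k + 1) * Real.log c
  set b : ℝ := 2 * n * n + m * (k + 1) * (2 * n)
  filter_upwards [eventually_add_mul_log_lt (D * (2 * a + 8 * c)) (D * (2 * b)),
    eventually_ge_atTop 1] with g hlog hg
  have hg' : (1 : ℝ) ≤ g := mod_cast hg
  calc _ ≤ D * (2 * (g ^ (2 * n + 2) * (a + b * Real.log g)) + c * g ^ (2 * n + 2) +
        7 * c * g ^ (2 * n + 2)) := by
        have := log_siegel_le (m := m) (n := n) (k := k) hg hc hC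
        have hpow : (g : ℝ) ^ (2 * n + 1) ≤ g ^ (2 * n + 2) := pow_le_pow_right₀ hg' (by omega)
        push_cast at this ⊢
        gcongr D * (2 * ?_ + ?_ + ?_)
        · rw [mul_assoc, ← pow_succ]
          gcongr
        · exact le_of_eq (by ring)
    _ = g ^ (2 * n + 2) * (D * (2 * a + 8 * c) + D * (2 * b) * Real.log g) := by ring
    _ < g ^ (2 * n + 2) * g := by gcongr
    _ = _ := by push_cast; rfl

end BakerParameters

section BoxFamily

variable {K : Type*} [Field K] {κ ν : Type*} [Fintype κ] [Fintype ν]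

/-- The exponents `∑ o, u o * Λ o` with `0 ≤ u o < U`, where the `Λ o = ∑ i, σ (β o i) * ℓ i` are
logarithms of the algebraic integers `α o`. -/
noncomputable def boxFamily {σ : K →+* ℂ} {ℓ : κ → ℂ} {α : ν → 𝓞 K} {β : ν → κ → 𝓞 K}
    (hexp : ∀ o, Complex.exp (∑ i, σ (β o i) * ℓ i) = σ (α o)) (U : ℕ) :
    FrequencyFamily σ ℓ (ν → Fin U) where
  coord u i := ∑ o, (u o : ℕ) * β o i
  expValue u := ∏ o, α o ^ (u o : ℕ)
  exp_sum u := by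
    simp only [map_sum, map_mul, map_natCast, map_prod, map_pow, sum_mul]
    rw [sum_comm, Complex.exp_sum]
    refine prod_congr rfl fun o _ ↦ ?_
    rw [← hexp, ← Complex.exp_nat_mul, mul_sum]
    simp only [mul_assoc]

variable {σ : K →+* ℂ} {ℓ : κ → ℂ} {α : ν → 𝓞 K} {β : ν → κ → 𝓞 K}
  (hexp : ∀ o, Complex.exp (∑ i, σ (β o i) * ℓ i) = σ (α o))

theorem boxFamily_freq (U : ℕ) (u : ν → Fin U) :
    (boxFamily hexp U).freq u = ∑ o, (u o : ℕ) * ∑ i, σ (β o i) * ℓ i := by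
  simp only [FrequencyFamily.freq, boxFamily, map_sum, map_mul, map_natCast, sum_mul, mul_sum]
  rw [sum_comm]
  simp only [mul_assoc]

theorem injective_boxFamily_freq (hind : LinearIndependent ℚ fun o ↦ ∑ i, σ (β o i) * ℓ i)
    (U : ℕ) : Function.Injective (boxFamily hexp U).freq := by
  intro u v huv
  simp only [boxFamily_freq] at huv
  have hdiff := Fintype.linearIndependent_iff.1 hind (fun o ↦ (u o : ℚ) - (v o : ℚ)) (by
    simpa [Algebra.smul_def, sub_mul, sub_eq_zero] using huv)
  ext o
  exact_mod_cast sub_eq_zero.1 (hdiff o)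

theorem house_pow_le_exp [NumberField K] (x : K) {j U : ℕ} (hj : j ≤ U) :
    house (x ^ j) ≤ Real.exp (U * house x) := by
  have hx := house_nonneg x
  calc house (x ^ j) ≤ house x ^ j := house_pow_le _ _
    _ ≤ Real.exp (house x) ^ j := by
        gcongr
        linarith [Real.add_one_le_exp (house x)]
    _ = Real.exp (j * house x) := (Real.exp_nat_mul _ _).symm
    _ ≤ Real.exp (U * house x) := by gcongr

theorem house_boxFamily_coord_le [NumberField K] (U : ℕ) (u : ν → Fin U) (i : κ) :
    house ((boxFamily hexp U).coord u i : K) ≤ (∑ i, ∑ o, house (β o i : K)) * U :=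
  calc house ((boxFamily hexp U).coord u i : K) ≤ ∑ o, house (β o i : K) * U := by
        simp only [boxFamily, map_sum, map_mul, map_natCast]
        refine (house_sum_le_sum_house _ _).trans (sum_le_sum fun o _ ↦ ?_)
        rw [house_nat_mul, mul_comm]
        have := house_nonneg (β o i : K)
        gcongr
        exact (u o).2.le
    _ ≤ (∑ i, ∑ o, house (β o i : K)) * U := by
        rw [← sum_mul]
        gcongr
        exact single_le_sum (f := fun i ↦ ∑ o, house (β o i : K))
          (fun _ _ ↦ sum_nonneg fun _ _ ↦ house_nonneg _) (mem_univ i)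

theorem house_boxFamily_expValue_le [NumberField K] (U : ℕ) (u : ν → Fin U) :
    house ((boxFamily hexp U).expValue u : K) ≤ Real.exp ((∑ o, house (α o : K)) * U) :=
  calc house ((boxFamily hexp U).expValue u : K) ≤ ∏ o, Real.exp (U * house (α o : K)) := by
        simp only [boxFamily, map_prod, map_pow]
        exact (house_finsetProd_le _ _).trans (prod_le_prod (fun _ _ ↦ house_nonneg _)
          fun o _ ↦ house_pow_le_exp _ (u o).2.le)
    _ = Real.exp ((∑ o, house (α o : K)) * U) := by rw [← Real.exp_sum, ← mul_sum, mul_comm]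

theorem norm_boxFamily_freq_le (U : ℕ) (u : ν → Fin U) :
    ‖(boxFamily hexp U).freq u‖ ≤ (∑ o, ‖∑ i, σ (β o i) * ℓ i‖) * U := by
  rw [boxFamily_freq, sum_mul]
  refine norm_sum_le_of_le _ fun o _ ↦ ?_
  rw [norm_mul, Complex.norm_natCast, mul_comm]
  gcongr
  exact (u o).2.le

theorem exists_sizeLE_boxFamily [NumberField K] :
    ∃ c : ℕ, 1 ≤ c ∧ ∀ U : ℕ, (boxFamily hexp U).SizeLE ↑(c * U) := by
  set bβ : ℝ := ∑ i, ∑ o, house (β o i : K)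
  set bα : ℝ := ∑ o, house (α o : K)
  set bΛ : ℝ := ∑ o, ‖∑ i, σ (β o i) * ℓ i‖
  have hbβ : 0 ≤ bβ := sum_nonneg fun _ _ ↦ sum_nonneg fun _ _ ↦ house_nonneg _
  have hbα : 0 ≤ bα := sum_nonneg fun _ _ ↦ house_nonneg _
  have hbΛ : 0 ≤ bΛ := sum_nonneg fun _ _ ↦ norm_nonneg _
  set c := ⌈1 + bβ + bα + bΛ⌉₊
  have hc : 1 + bβ + bα + bΛ ≤ c := Nat.le_ceil _
  have hle (U : ℕ) {b : ℝ} (hb : b ≤ c) : b * U ≤ ↑(c * U) := by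
    rw [Nat.cast_mul]
    gcongr
  exact ⟨c, by exact_mod_cast (by linarith : (1 : ℝ) ≤ c), fun U ↦
    { house_coord := fun u i ↦ (house_boxFamily_coord_le hexp U u i).trans (hle U (by linarith))
      house_expValue := fun u ↦
        (house_boxFamily_expValue_le hexp U u).trans (Real.exp_le_exp.2 (hle U (by linarith)))
      norm_freq := fun u ↦ (norm_boxFamily_freq_le hexp U u).trans (hle U (by linarith)) }⟩

theorem card_le_card_of_exp_sum_integer [NumberField K]
    (hexp : ∀ o, Complex.exp (∑ i, σ (β o i) * ℓ i) = σ (α o))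
    (hind : LinearIndependent ℚ fun o ↦ ∑ i, σ (β o i) * ℓ i) :
    Fintype.card ν ≤ Fintype.card κ := by
  classical
  set m := Fintype.card κ
  set n := Fintype.card ν
  by_contra! hmn
  obtain ⟨c, hc, hsize⟩ := exists_sizeLE_boxFamily hexp
  obtain ⟨C, hC, hnot⟩ := FrequencyFamily.exists_const_not_injective_freq σ ℓ
  obtain ⟨g, hparam, hg⟩ := ((eventually_baker_parameters (m := m) (n := n)
    (Module.finrank ℚ K) hc hC).and (eventually_ge_atTop
      (1 + 2 * (2 * n * n + 1) ^ m + (2 * c + 1)))).exists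
  have hcard : Fintype.card (ν → Fin (g ^ (2 * n))) = (g ^ (2 * n)) ^ n := by
    simp only [Fintype.card_fun, Fintype.card_fin, n]
  have hU : 1 ≤ g ^ (2 * n) := Nat.one_le_pow _ _ (by omega)
  refine hnot _ (boxFamily hexp (g ^ (2 * n))) (c * g ^ (2 * n)) (hsize _)
    (Nat.mul_pos hc hU) g (2 * n * n) (g ^ (2 * n + 2)) (by omega) ?_ ?_ ?_ ?_
    (injective_boxFamily_freq hexp hind _)
  · rw [hcard]
    exact two_mul_pow_mul_le_pow_pow (m := m) (n := n) hmn (by omega)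
  · exact two_mul_mul_pow_add_one_le (by omega)
  · rw [hcard, ← pow_mul]
    exact Nat.pow_le_pow_right (by omega) (by omega)
  · rw [hcard]
    exact hparam

theorem card_le_card_of_exp_sum {b : ν → κ → K} [NumberField K]
    (hexp : ∀ o, Complex.exp (∑ i, σ (b o i) * ℓ i) = σ (α o))
    (hind : LinearIndependent ℚ fun o ↦ ∑ i, σ (b o i) * ℓ i) :
    Fintype.card ν ≤ Fintype.card κ := by
  classical
  obtain ⟨y, hy, hint⟩ := exists_integral_multiples ℤ ℚ
    (univ.image fun p : ν × κ ↦ b p.1 p.2)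
  obtain ⟨β, hβ⟩ : ∃ β : ν → κ → 𝓞 K, ∀ o i, (β o i : K) = y • b o i :=
    ⟨fun o i ↦ ⟨_, hint _ (mem_image_of_mem _ (mem_univ (o, i)))⟩, fun _ _ ↦ rfl⟩
  have hsum (o : ν) : ∑ i, σ (β o i) * (ℓ i / y) = ∑ i, σ (b o i) * ℓ i := by
    refine sum_congr rfl fun i _ ↦ ?_
    have hy' : (y : ℂ) ≠ 0 := mod_cast hy
    simp only [hβ, zsmul_eq_mul, map_mul, map_intCast]
    field_simp
  exact card_le_card_of_exp_sum_integer (fun o ↦ (congrArg _ (hsum o)).trans (hexp o))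
    (by rwa [funext hsum])

end BoxFamily

section Baker

variable {K : Type*} [Field K] [NumberField K] {ν : Type*} [Fintype ν] {σ : K →+* ℂ}
  {ℓ : ν → ℂ} {α : ν → 𝓞 K} {c : ν → K}

theorem eq_zero_of_sum_mul_log_eq_zero (hexp : ∀ i, Complex.exp (ℓ i) = σ (α i))
    (hind : LinearIndependent ℚ ℓ) (hsum : ∑ i, σ (c i) * ℓ i = 0) : c = 0 := by
  classical
  by_contra hc
  obtain ⟨i₀, hi₀⟩ := Function.ne_iff.1 hc
  let b (i : ν) (j : {i // i ≠ i₀}) : K := if i = i₀ then -c j / c i₀ else if i = j then 1 else 0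
  have hb (i : ν) : ∑ j, σ (b i j) * ℓ j = ℓ i := by
    by_cases hi : i = i₀
    · subst hi
      have hσ : σ (c i) ≠ 0 := by simpa using hi₀
      have hsplit := Fintype.sum_eq_add_sum_subtype_ne (fun j ↦ σ (c j) * ℓ j) i
      simp only [b, if_true, map_div₀, map_neg, div_mul_eq_mul_div, neg_mul, ← sum_div,
        sum_neg_distrib]
      rw [div_eq_iff hσ]
      linear_combination hsplit - hsum
    · rw [Fintype.sum_eq_single ⟨i, hi⟩]
      · simp [b, hi]
      · intro j hj
        have hij : i ≠ j := fun h ↦ hj (Subtype.ext h.symm)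
        simp [b, hi, hij]
  have hcard := card_le_card_of_exp_sum (b := b) (fun i ↦ by rw [hb, hexp])
    (by simpa only [hb] using hind)
  exact hcard.not_gt (Fintype.card_subtype_lt (x := i₀) (by simp))

theorem sum_embedding_mul_log_eq_zero (hexp : ∀ i, Complex.exp (ℓ i) = σ (α i))
    (hsum : ∑ i, σ (c i) * ℓ i = 0) (τ : K →+* ℂ) : ∑ i, τ (c i) * ℓ i = 0 := by
  obtain ⟨ν', a, ha, hspan, hind⟩ := exists_linearIndependent' ℚ ℓ
  have : Fintype ν' := Fintype.ofInjective a ha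
  have hcomb (i : ν) : ∃ r : ν' → ℚ, ∑ j, r j • ℓ (a j) = ℓ i :=
    (Submodule.mem_span_range_iff_exists_fun ℚ).1 (hspan ▸ Submodule.subset_span ⟨i, rfl⟩)
  choose r hr using hcomb
  have hregroup (ρ : K →+* ℂ) :
      ∑ i, ρ (c i) * ℓ i = ∑ j, ρ (∑ i, r i j * c i) * ℓ (a j) := by
    calc ∑ i, ρ (c i) * ℓ i = ∑ i, ρ (c i) * ∑ j, r i j • ℓ (a j) := by simp only [hr]
      _ = ∑ j, ∑ i, r i j * ρ (c i) * ℓ (a j) := by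
          simp only [mul_sum, Rat.smul_def]
          rw [sum_comm]
          exact sum_congr rfl fun _ _ ↦ sum_congr rfl fun _ _ ↦ by ring
      _ = ∑ j, ρ (∑ i, r i j * c i) * ℓ (a j) := by
          simp only [map_sum, map_mul, map_ratCast, sum_mul]
  have hzero := eq_zero_of_sum_mul_log_eq_zero (ℓ := ℓ ∘ a) (α := α ∘ a) (fun j ↦ hexp (a j)) hind
    ((hregroup σ).symm.trans hsum)
  rw [hregroup]
  exact sum_eq_zero fun j _ ↦ by rw [congrFun hzero j, Pi.zero_apply, map_zero, zero_mul]

end Baker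

section AbelSummation

open MeasureTheory Asymptotics

variable {f : ℕ → ℂ} {C : ℝ}

theorem lseriesSummable_of_norm_sum_le (hC : ∀ n, ‖∑ k ∈ Icc 1 n, f k‖ ≤ C) {s : ℝ}
    (hs : 1 < s) : LSeriesSummable f s := by
  refine LSeriesSummable_of_bounded_of_one_lt_re (m := C + C) (fun n hn ↦ ?_) (by simpa using hs)
  obtain ⟨n, rfl⟩ := Nat.exists_eq_succ_of_ne_zero hn
  have hdiff : f (n + 1) = ∑ k ∈ Icc 1 (n + 1), f k - ∑ k ∈ Icc 1 n, f k := by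
    rw [sum_Icc_succ_top (by omega), add_sub_cancel_left]
  rw [Nat.succ_eq_add_one, hdiff]
  exact norm_sub_le_of_le (hC _) (hC _)

theorem tendsto_integral_sum_mul_cpow (hC : ∀ n, ‖∑ k ∈ Icc 1 n, f k‖ ≤ C) :
    Tendsto (fun s : ℝ ↦ ∫ t in Set.Ioi (1 : ℝ),
        (∑ k ∈ Icc 1 ⌊t⌋₊, f k) * (t : ℂ) ^ (-((s : ℂ) + 1))) (𝓝[>] 1)
      (𝓝 (∫ t in Set.Ioi (1 : ℝ), (∑ k ∈ Icc 1 ⌊t⌋₊, f k) * (t : ℂ) ^ (-2 : ℂ))) := by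
  have hmeas : Measurable fun t : ℝ ↦ ∑ k ∈ Icc 1 ⌊t⌋₊, f k :=
    (measurable_from_nat (f := fun n ↦ ∑ k ∈ Icc 1 n, f k)).comp Nat.measurable_floor
  refine tendsto_integral_filter_of_dominated_convergence (fun t ↦ C * t ^ (-2 : ℝ))
    (Eventually.of_forall fun s ↦ ?_) ?_ ?_ ?_
  · exact (hmeas.mul (by fun_prop)).aestronglyMeasurable
  · filter_upwards [self_mem_nhdsWithin] with s hs
    filter_upwards [ae_restrict_mem measurableSet_Ioi] with t ht
    rw [norm_mul, Complex.norm_cpow_eq_rpow_re_of_pos (one_pos.trans ht)]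
    refine mul_le_mul (hC _) (Real.rpow_le_rpow_of_exponent_le ht.le ?_)
      (Real.rpow_nonneg (one_pos.trans ht).le _) ((norm_nonneg _).trans (hC 0))
    have : 1 < s := hs
    simp only [Complex.neg_re, Complex.add_re, Complex.ofReal_re, Complex.one_re]
    linarith
  · exact (integrableOn_Ioi_rpow_of_lt (by norm_num) one_pos).const_mul C
  · filter_upwards [ae_restrict_mem measurableSet_Ioi] with t ht
    have hcont : Continuous fun s : ℝ ↦ (t : ℂ) ^ (-((s : ℂ) + 1)) :=
      Continuous.const_cpow (by fun_prop) (Or.inl (mod_cast (one_pos.trans ht).ne'))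
    have hlim := (hcont.tendsto 1).mono_left (nhdsWithin_le_nhds (s := Set.Ioi 1))
    rw [Complex.ofReal_one, one_add_one_eq_two] at hlim
    exact hlim.const_mul _

theorem tendsto_LSeries_nhdsGT_one_of_norm_sum_le (hC : ∀ n, ‖∑ k ∈ Icc 1 n, f k‖ ≤ C) :
    Tendsto (fun s : ℝ ↦ LSeries f s) (𝓝[>] 1)
      (𝓝 (∫ t in Set.Ioi (1 : ℝ), (∑ k ∈ Icc 1 ⌊t⌋₊, f k) * (t : ℂ) ^ (-2 : ℂ))) := by
  have hbigO : (fun n ↦ ∑ k ∈ Icc 1 n, f k) =O[atTop] fun n ↦ (n : ℝ) ^ (0 : ℝ) := by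
    exact IsBigO.of_bound C (Eventually.of_forall fun n ↦ by simpa using hC n)
  have hmul := ((Complex.continuous_ofReal.tendsto 1).mono_left nhdsWithin_le_nhds).mul
    (tendsto_integral_sum_mul_cpow hC)
  rw [Complex.ofReal_one, one_mul] at hmul
  refine hmul.congr' ?_
  filter_upwards [self_mem_nhdsWithin] with s hs
  exact (LSeries_eq_mul_integral f le_rfl (by simpa using one_pos.trans hs)
    (lseriesSummable_of_norm_sum_le hC hs) hbigO).symm

theorem tendsto_sum_div_of_norm_sum_le_of_zero (hC : ∀ n, ‖∑ k ∈ Icc 0 n, f k‖ ≤ C)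
    (hf : f 0 = 0) : Tendsto (fun n : ℕ ↦ ∑ k ∈ Icc 0 n, f k / k) atTop
      (𝓝 (∫ t in Set.Ioi (1 : ℝ), (∑ k ∈ Icc 0 ⌊t⌋₊, f k) * (t : ℂ) ^ (-2 : ℂ))) := by
  have hderiv {t : ℝ} (ht : t ≠ 0) :
      deriv (fun t : ℝ ↦ (t : ℂ) ^ (-1 : ℂ)) t = -(t : ℂ) ^ (-2 : ℂ) := by
    rw [Complex.deriv_ofReal_cpow_const ht (by norm_num)]
    norm_num
  have hlim : Tendsto (fun n : ℕ ↦ ((n : ℝ) : ℂ) ^ (-1 : ℂ) * ∑ k ∈ Icc 0 n, f k) atTop (𝓝 0) := by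
    refine squeeze_zero_norm (fun n ↦ ?_) (by
      simpa using (tendsto_inv_atTop_nhds_zero_nat (𝕜 := ℝ)).mul_const C)
    rw [norm_mul, Complex.cpow_neg_one, norm_inv, Complex.norm_real, Real.norm_natCast]
    gcongr
    exact hC n
  have hdom : (fun t : ℝ ↦ deriv (fun t : ℝ ↦ (t : ℂ) ^ (-1 : ℂ)) t * ∑ k ∈ Icc 0 ⌊t⌋₊, f k)
      =O[atTop] fun t ↦ t ^ (-2 : ℝ) := by
    refine IsBigO.of_bound C ?_
    filter_upwards [eventually_gt_atTop 0] with t ht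
    rw [hderiv ht.ne', norm_mul, norm_neg, Complex.norm_cpow_eq_rpow_re_of_pos ht, mul_comm,
      Real.norm_of_nonneg (by positivity)]
    exact mul_le_mul_of_nonneg_right (hC _) (by positivity)
  have habel := tendsto_sum_mul_atTop_nhds_one_sub_integral₀ f
    (f := fun t : ℝ ↦ (t : ℂ) ^ (-1 : ℂ)) hf
    (fun t ht ↦ differentiableAt_id.ofReal_cpow_const (zero_lt_one.trans_le ht).ne' (by norm_num))
    (Iff.mpr integrableOn_Ici_iff_integrableOn_Ioi <|
      integrableOn_Ioi_deriv_ofReal_cpow zero_lt_one (by norm_num)).locallyIntegrableOn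
    hlim hdom (integrableAtFilter_rpow_atTop_iff.2 (by norm_num))
  rw [zero_sub, ← integral_neg] at habel
  convert habel using 2 with n
  · exact sum_congr rfl fun k _ ↦ by
      rw [Complex.cpow_neg_one, Complex.ofReal_natCast, div_eq_inv_mul]
  · refine setIntegral_congr_fun measurableSet_Ioi fun t ht ↦ ?_
    simp only [hderiv (zero_lt_one.trans ht).ne']
    ring

theorem tendsto_sum_div_of_norm_sum_le (hC : ∀ n, ‖∑ k ∈ Icc 1 n, f k‖ ≤ C) :
    Tendsto (fun n : ℕ ↦ ∑ k ∈ Icc 1 n, f k / k) atTop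
      (𝓝 (∫ t in Set.Ioi (1 : ℝ), (∑ k ∈ Icc 1 ⌊t⌋₊, f k) * (t : ℂ) ^ (-2 : ℂ))) := by
  let c (n : ℕ) : ℂ := if n = 0 then 0 else f n
  have hsum (g : ℕ → ℂ) (n : ℕ) : ∑ k ∈ Icc 0 n, c k * g k = ∑ k ∈ Icc 1 n, f k * g k := by
    rw [← insert_Icc_add_one_left_eq_Icc n.zero_le, sum_insert (by simp)]
    simp only [c, if_true, zero_mul, zero_add]
    exact sum_congr rfl fun k hk ↦ by rw [if_neg (by grind)]
  have hsum' (n : ℕ) : ∑ k ∈ Icc 0 n, c k = ∑ k ∈ Icc 1 n, f k := by simpa using hsum 1 n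
  have hc := tendsto_sum_div_of_norm_sum_le_of_zero (f := c) (by simpa only [hsum'] using hC)
    (if_pos rfl)
  simpa only [div_eq_mul_inv, hsum, hsum'] using hc

end AbelSummation

section PeriodicLSeries

variable {q : ℕ} [NeZero q] {Φ : ZMod q → ℂ}

theorem sum_range_natCast_zmod (Φ : ZMod q → ℂ) : ∑ k ∈ range q, Φ k = ∑ j, Φ j :=
  sum_nbij' (fun k ↦ (k : ZMod q)) ZMod.val (by simp) (by simp [ZMod.val_lt])
    (fun k hk ↦ ZMod.val_cast_of_lt (mem_range.1 hk)) (by simp) (by simp)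

theorem exists_norm_sum_le_of_sum_eq_zero (hΦ : ∑ j, Φ j = 0) :
    ∃ C, ∀ n : ℕ, ‖∑ k ∈ Icc 1 n, Φ k‖ ≤ C := by
  have hper : Function.Periodic (fun n ↦ ∑ k ∈ range n, Φ k) q := by
    intro n
    induction n with
    | zero => simp [sum_range_natCast_zmod, hΦ]
    | succ n ih => simpa [add_right_comm n 1 q, sum_range_succ] using ih
  have hbound (n : ℕ) : ‖∑ k ∈ range n, Φ k‖ ≤ ∑ r ∈ range q, ‖∑ k ∈ range r, Φ k‖ := by
    rw [← hper.map_mod_nat n]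
    exact single_le_sum (f := fun r ↦ ‖∑ k ∈ range r, Φ k‖) (fun _ _ ↦ norm_nonneg _)
      (mem_range.2 (Nat.mod_lt n (NeZero.pos q)))
  set B := ∑ r ∈ range q, ‖∑ k ∈ range r, Φ k‖
  refine ⟨B + B, fun n ↦ ?_⟩
  rw [← Ico_add_one_right_eq_Icc, sum_Ico_eq_sub _ (by omega)]
  exact norm_sub_le_of_le (hbound _) (hbound _)

theorem tendsto_LFunction_nhdsGT_one (hΦ : ∑ j, Φ j = 0) :
    Tendsto (fun s : ℝ ↦ ZMod.LFunction Φ s) (𝓝[>] 1) (𝓝 (ZMod.LFunction Φ 1)) := by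
  have hcont : Continuous fun s : ℝ ↦ ZMod.LFunction Φ s :=
    (ZMod.differentiable_LFunction_of_sum_zero hΦ).continuous.comp Complex.continuous_ofReal
  simpa using (hcont.tendsto 1).mono_left nhdsWithin_le_nhds

theorem tendsto_sum_div_LFunction_one (hΦ : ∑ j, Φ j = 0) :
    Tendsto (fun N : ℕ ↦ ∑ n ∈ Icc 1 N, Φ n / n) atTop (𝓝 (ZMod.LFunction Φ 1)) := by
  obtain ⟨C, hC⟩ := exists_norm_sum_le_of_sum_eq_zero hΦ
  have hLSeries : Tendsto (fun s : ℝ ↦ LSeries (fun n ↦ Φ n) s) (𝓝[>] 1)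
      (𝓝 (ZMod.LFunction Φ 1)) := by
    refine (tendsto_LFunction_nhdsGT_one hΦ).congr' ?_
    filter_upwards [self_mem_nhdsWithin] with s hs
    exact ZMod.LFunction_eq_LSeries Φ (by simpa using hs)
  rw [tendsto_nhds_unique hLSeries (tendsto_LSeries_nhdsGT_one_of_norm_sum_le hC)]
  exact tendsto_sum_div_of_norm_sum_le hC

theorem tendsto_sum_Icc_one_div_natCast_atTop :
    Tendsto (fun N : ℕ ↦ ∑ n ∈ Icc 1 N, 1 / (n : ℝ)) atTop atTop := by
  refine Real.tendsto_sum_range_one_div_nat_succ_atTop.congr fun N ↦ ?_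
  rw [← Ico_add_one_right_eq_Icc, sum_Ico_eq_sum_range]
  simp [add_comm]

theorem sum_eq_zero_of_tendsto_sum_div {L : ℂ}
    (hL : Tendsto (fun N : ℕ ↦ ∑ n ∈ Icc 1 N, Φ n / n) atTop (𝓝 L)) : ∑ j, Φ j = 0 := by
  set μ : ℂ := (∑ j, Φ j) / q with hμ
  have hq : (q : ℂ) ≠ 0 := NeZero.ne _
  have hcentered : ∑ j, (Φ j - μ) = 0 := by
    simp only [sum_sub_distrib, sum_const, card_univ, ZMod.card, nsmul_eq_mul, hμ]
    rw [mul_div_cancel₀ _ hq, sub_self]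
  by_contra hne
  have hμ₀ : μ ≠ 0 := div_ne_zero hne hq
  have hharmonic := ((hL.sub (tendsto_sum_div_LFunction_one hcentered)).const_mul μ⁻¹).norm
  refine not_tendsto_nhds_of_tendsto_atTop tendsto_sum_Icc_one_div_natCast_atTop _
    (hharmonic.congr fun N ↦ ?_)
  have hdiff : μ⁻¹ * (∑ n ∈ Icc 1 N, Φ n / n - ∑ n ∈ Icc 1 N, (Φ n - μ) / n) =
      ((∑ n ∈ Icc 1 N, 1 / (n : ℝ) : ℝ) : ℂ) := by
    rw [← sum_sub_distrib, mul_sum]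
    push_cast
    exact sum_congr rfl fun n _ ↦ by field_simp; ring
  rw [hdiff, Complex.norm_real, Real.norm_of_nonneg (sum_nonneg fun n _ ↦ by positivity)]

theorem norm_stdAddChar (a : ZMod q) : ‖ZMod.stdAddChar a‖ = 1 := by
  rw [ZMod.stdAddChar_apply]
  exact Circle.norm_coe _

theorem one_sub_stdAddChar_mem_slitPlane {a : ZMod q} (ha : a ≠ 0) :
    1 - ZMod.stdAddChar a ∈ Complex.slitPlane := by
  refine Complex.mem_slitPlane_iff.2 (Or.inl ?_)
  have hre : (ZMod.stdAddChar a).re ≠ 1 := fun h ↦ ha <| ZMod.injective_stdAddChar <| by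
    have hreal := Complex.re_eq_norm.1 (h.trans (norm_stdAddChar a).symm)
    rw [AddChar.map_zero_eq_one]
    exact Complex.ext h (Complex.nonneg_iff.1 hreal).2.symm
  have := (Complex.re_le_norm (ZMod.stdAddChar a)).trans_eq (norm_stdAddChar a)
  simpa using this.lt_of_ne hre

theorem eq_sum_dft_mul_stdAddChar (hΦ : ∑ j, Φ j = 0) (n : ℕ) :
    Φ n = (q : ℂ)⁻¹ * ∑ a ∈ univ.erase 0, ZMod.dft Φ a * ZMod.stdAddChar a ^ n := by
  have hinv := ZMod.invDFT_apply (ZMod.dft Φ) (n : ZMod q)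
  have hzero : ZMod.dft Φ 0 = 0 := by simpa [ZMod.dft_apply] using hΦ
  rw [LinearEquiv.symm_apply_apply, ← add_sum_erase _ _ (mem_univ 0), hzero] at hinv
  simp only [smul_eq_mul, mul_zero, zero_add] at hinv
  rw [hinv]
  congr 1
  refine sum_congr rfl fun a _ ↦ ?_
  rw [mul_comm a, ← nsmul_eq_mul, AddChar.map_nsmul_eq_pow, mul_comm]

theorem hasSum_div_mul_pow (hΦ : ∑ j, Φ j = 0) {x : ℝ} (hx : |x| < 1) :
    HasSum (fun n : ℕ ↦ Φ n / n * (x : ℂ) ^ n) (-((q : ℂ)⁻¹ * ∑ a ∈ univ.erase 0,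
      ZMod.dft Φ a * Complex.log (1 - ZMod.stdAddChar a * x))) := by
  have hlog (a : ZMod q) := Complex.hasSum_taylorSeries_neg_log
    (z := ZMod.stdAddChar a * x) (by simpa [norm_stdAddChar] using hx)
  have hsum := (hasSum_sum (s := univ.erase 0) fun a _ ↦
    (hlog a).mul_left (ZMod.dft Φ a)).mul_left (q : ℂ)⁻¹
  simp only [mul_neg, sum_neg_distrib] at hsum
  have hterm (n : ℕ) : Φ n / n * (x : ℂ) ^ n = (q : ℂ)⁻¹ * ∑ a ∈ univ.erase 0,
      ZMod.dft Φ a * ((ZMod.stdAddChar a * x) ^ n / n) := by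
    rw [eq_sum_dft_mul_stdAddChar hΦ, mul_div_assoc, mul_assoc, sum_div, sum_mul]
    exact congrArg _ (sum_congr rfl fun a _ ↦ by ring)
  simpa only [hterm] using hsum

theorem LFunction_one_eq_sum_dft_mul_log (hΦ : ∑ j, Φ j = 0) :
    ZMod.LFunction Φ 1 = -((q : ℂ)⁻¹ * ∑ a ∈ univ.erase 0,
      ZMod.dft Φ a * Complex.log (1 - ZMod.stdAddChar a)) := by
  have hpartial : Tendsto (fun N : ℕ ↦ ∑ n ∈ range N, Φ n / (n : ℂ)) atTop
      (𝓝 (ZMod.LFunction Φ 1)) := by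
    refine (tendsto_add_atTop_iff_nat 1).1 ((tendsto_sum_div_LFunction_one hΦ).congr fun N ↦ ?_)
    rw [← Ico_add_one_right_eq_Icc, sum_Ico_eq_sub _ (by omega)]
    simp
  have habel := Complex.tendsto_tsum_powerSeries_nhdsWithin_lt hpartial
  rw [tendsto_map'_iff] at habel
  have hlog : Tendsto (fun x : ℝ ↦ -((q : ℂ)⁻¹ * ∑ a ∈ univ.erase 0,
      ZMod.dft Φ a * Complex.log (1 - ZMod.stdAddChar a * x))) (𝓝[<] 1)
      (𝓝 (-((q : ℂ)⁻¹ * ∑ a ∈ univ.erase 0,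
        ZMod.dft Φ a * Complex.log (1 - ZMod.stdAddChar a)))) := by
    refine Tendsto.neg (Tendsto.const_mul _ (tendsto_finsetSum _ fun a ha ↦ Tendsto.const_mul _ ?_))
    have hcont : Continuous fun x : ℝ ↦ 1 - ZMod.stdAddChar a * (x : ℂ) := by fun_prop
    have hlim := (hcont.tendsto 1).mono_left (nhdsWithin_le_nhds (s := Set.Iio 1))
    rw [Complex.ofReal_one, mul_one] at hlim
    exact hlim.clog (one_sub_stdAddChar_mem_slitPlane (ne_of_mem_erase ha))
  refine tendsto_nhds_unique (habel.congr' ?_) hlog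
  filter_upwards [Ioo_mem_nhdsLT (show (-1 : ℝ) < 1 by norm_num)] with x hx
  exact (hasSum_div_mul_pow hΦ (abs_lt.2 hx)).tsum_eq

end PeriodicLSeries

section GaloisTransfer

variable {q : ℕ} [NeZero q]

theorem isPrimitiveRoot_stdAddChar (u : (ZMod q)ˣ) :
    IsPrimitiveRoot (ZMod.stdAddChar (u : ZMod q)) q where
  pow_eq_one := by simp [← AddChar.map_nsmul_eq_pow]
  dvd_of_pow_eq_one n hn := by
    rw [← AddChar.map_nsmul_eq_pow, ← AddChar.map_zero_eq_one (ZMod.stdAddChar (N := q))] at hn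
    have hzero : (n : ZMod q) * u = 0 := by simpa using ZMod.injective_stdAddChar hn
    rwa [Units.mul_left_eq_zero, ZMod.natCast_eq_zero_iff] at hzero

theorem LFunction_one_eq_zero_iff {Φ : ZMod q → ℂ} (hΦ : ∑ j, Φ j = 0) :
    ZMod.LFunction Φ 1 = 0 ↔
      ∑ a : {a : ZMod q // a ≠ 0}, ZMod.dft Φ a * Complex.log (1 - ZMod.stdAddChar a.1) = 0 := by
  rw [LFunction_one_eq_sum_dft_mul_log hΦ, neg_eq_zero,
    mul_eq_zero_iff_left (inv_ne_zero (NeZero.ne _)), sum_subtype (p := (· ≠ 0)) _ (by simp)]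

theorem exists_integer_forall_exists_embedding_eq_stdAddChar (q : ℕ) [NeZero q] (K : Type*)
    [Field K] [CharZero K] [IsCyclotomicExtension {q} ℚ K] :
    ∃ z : 𝓞 K, ∀ u : (ZMod q)ˣ, ∃ τ : K →+* ℂ, τ z = ZMod.stdAddChar (u : ZMod q) := by
  have hζ := IsCyclotomicExtension.zeta_spec q ℚ K
  refine ⟨hζ.toInteger, fun u ↦ ?_⟩
  let e := hζ.embeddingsEquivPrimitiveRoots ℂ
    (Polynomial.cyclotomic.irreducible_rat (NeZero.pos q))
  let root : primitiveRoots q ℂ :=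
    ⟨_, (mem_primitiveRoots (NeZero.pos q)).2 (isPrimitiveRoot_stdAddChar u)⟩
  exact ⟨(e.symm root).toRingHom, congrArg Subtype.val (e.apply_symm_apply root)⟩

variable {K : Type*} [Field K]

/-- The discrete Fourier transform of a rational-valued function on `ZMod q`, computed in a field
containing `ζ` instead of the standard root of unity. Exponents are the representatives in
`[0, q)` of residue classes. -/
def algebraicDFT (ζ : K) (F : ZMod q → ℚ) (a : ZMod q) : K :=
  ∑ j : ZMod q, ζ ^ (-(j * a)).val * (F j : K)

variable {ζ : K} {τ : K →+* ℂ} {u : (ZMod q)ˣ}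

theorem embedding_pow_val (hτ : τ ζ = ZMod.stdAddChar (u : ZMod q)) (a : ZMod q) :
    τ (ζ ^ a.val) = ZMod.stdAddChar (a * (u : ZMod q)) := by
  rw [map_pow, hτ, ← AddChar.map_nsmul_eq_pow, nsmul_eq_mul, ZMod.natCast_zmod_val]

theorem embedding_algebraicDFT (hτ : τ ζ = ZMod.stdAddChar (u : ZMod q)) (F : ZMod q → ℚ)
    (a : ZMod q) :
    τ (algebraicDFT ζ F a) = ZMod.dft (fun j ↦ (F ((u⁻¹ : (ZMod q)ˣ).val * j) : ℂ)) a := by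
  rw [algebraicDFT, ZMod.dft_apply, map_sum]
  refine Fintype.sum_equiv (Units.mulLeft u) _ _ fun j ↦ ?_
  rw [map_mul, embedding_pow_val hτ, map_ratCast, Units.mulLeft_apply, Units.inv_mul_cancel_left,
    smul_eq_mul]
  congr 2
  ring

theorem sum_unit_mul {M : Type*} [AddCommMonoid M] (Φ : ZMod q → M) (u : (ZMod q)ˣ) :
    ∑ j, Φ ((u : ZMod q) * j) = ∑ j, Φ j :=
  Fintype.sum_equiv (Units.mulLeft u) _ _ fun _ ↦ rfl

theorem exp_log_one_sub_stdAddChar {z : 𝓞 K} (hτ : τ z = ZMod.stdAddChar (1 : ZMod q))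
    {a : ZMod q} (ha : a ≠ 0) :
    Complex.exp (Complex.log (1 - ZMod.stdAddChar a)) = τ (1 - z ^ a.val : 𝓞 K) := by
  have hpow := embedding_pow_val (u := 1) hτ a
  rw [Units.val_one, mul_one] at hpow
  have hcoe : ((1 - z ^ a.val : 𝓞 K) : K) = 1 - (z : K) ^ a.val := by
    simp only [map_sub, map_one, map_pow]
  rw [Complex.exp_log (Complex.slitPlane_ne_zero (one_sub_stdAddChar_mem_slitPlane ha)), hcoe,
    map_sub, map_one, hpow]

theorem LFunction_unit_mul_one_eq_zero {F : ZMod q → ℚ} (hF : ∑ j, (F j : ℂ) = 0)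
    (hL : ZMod.LFunction (fun j ↦ (F j : ℂ)) 1 = 0) (u : (ZMod q)ˣ) :
    ZMod.LFunction (fun j ↦ (F ((u : ZMod q) * j) : ℂ)) 1 = 0 := by
  have : IsCyclotomicExtension {q} ℚ (CyclotomicField q ℚ) :=
    CyclotomicField.isCyclotomicExtension q ℚ
  obtain ⟨z, hz⟩ :=
    exists_integer_forall_exists_embedding_eq_stdAddChar q (CyclotomicField q ℚ)
  obtain ⟨σ, hσ⟩ := hz 1
  obtain ⟨τ, hτ⟩ := hz u⁻¹
  rw [LFunction_one_eq_zero_iff hF] at hL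
  rw [LFunction_one_eq_zero_iff ((sum_unit_mul (fun j ↦ (F j : ℂ)) u).trans hF)]
  let c (a : {a : ZMod q // a ≠ 0}) : CyclotomicField q ℚ :=
    algebraicDFT (z : CyclotomicField q ℚ) F a
  have hsum : ∑ a, σ (c a) * Complex.log (1 - ZMod.stdAddChar a.1) = 0 := by
    simpa only [c, embedding_algebraicDFT hσ, inv_one, Units.val_one, one_mul] using hL
  have htransfer := sum_embedding_mul_log_eq_zero
    (fun a ↦ exp_log_one_sub_stdAddChar hσ a.2) hsum τ
  simpa only [c, embedding_algebraicDFT hτ, inv_inv] using htransfer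

end GaloisTransfer

section OkadaCriterion

variable {q : ℕ}

theorem coprime_of_mem_factoredNumbers_primeFactors {m k : ℕ}
    (hm : m ∈ Nat.factoredNumbers q.primeFactors) (hk : k.Coprime q) : m.Coprime k :=
  Nat.coprime_of_dvd fun p hp hpm hpk ↦ hp.ne_one <| Nat.eq_one_of_dvd_coprimes hk hpk <|
    Nat.dvd_of_mem_primeFactors (Nat.mem_factoredNumbers'.1 hm p hp hpm)

theorem exists_coprime_mul_mem_factoredNumbers_eq (hq : q ≠ 0) {n : ℕ} (hn : n ≠ 0) :
    ∃ k m, k.Coprime q ∧ m ∈ Nat.factoredNumbers q.primeFactors ∧ k * m = n := by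
  induction n using induction_on_primes with
  | zero => exact absurd rfl hn
  | one => exact ⟨1, 1, by simp, by simp [Nat.mem_factoredNumbers], rfl⟩
  | prime_mul p a hp ih =>
    obtain ⟨k, m, hk, hm, rfl⟩ := ih (right_ne_zero_of_mul hn)
    by_cases hpq : p ∣ q
    · have hp_mem : p ∈ Nat.factoredNumbers q.primeFactors :=
        Nat.mem_factoredNumbers_of_primeFactors_subset hp.ne_zero
          (Nat.primeFactors_mono hpq hq)
      exact ⟨k, p * m, hk, Nat.mul_mem_factoredNumbers hp_mem hm, mul_left_comm _ _ _⟩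
    · exact ⟨p * k, m, Nat.Coprime.mul_left (hp.coprime_iff_not_dvd.2 hpq) hk, hm,
        mul_assoc _ _ _⟩

theorem eq_and_eq_of_coprime_mul_factoredNumbers {k m k' m' : ℕ} (hk : k.Coprime q)
    (hm : m ∈ Nat.factoredNumbers q.primeFactors) (hk' : k'.Coprime q)
    (hm' : m' ∈ Nat.factoredNumbers q.primeFactors) (h : k * m = k' * m') : k = k' ∧ m = m' := by
  have hdvd : m ∣ m' := (coprime_of_mem_factoredNumbers_primeFactors hm hk').dvd_of_dvd_mul_left
    (h ▸ dvd_mul_left m k)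
  have hdvd' : m' ∣ m := (coprime_of_mem_factoredNumbers_primeFactors hm' hk).dvd_of_dvd_mul_left
    (h ▸ dvd_mul_left m' k')
  obtain rfl := Nat.dvd_antisymm hdvd hdvd'
  exact ⟨Nat.eq_of_mul_eq_mul_right (Nat.ne_zero_of_mem_factoredNumbers hm).bot_lt h, rfl⟩

theorem hasSum_indicator_factoredNumbers_inv {s : Finset ℕ} (hs : ∀ p ∈ s, p.Prime) :
    HasSum ((Nat.factoredNumbers s).indicator fun n ↦ (n : ℝ)⁻¹) (∏ p ∈ s, (1 - (p : ℝ)⁻¹)⁻¹) := by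
  let inv : ℕ →* ℝ := invMonoidHom.comp (Nat.castRingHom ℝ : ℕ →* ℝ)
  have hinv {p : ℕ} (hp : p.Prime) : ‖inv p‖ < 1 := by
    simpa [inv] using inv_lt_one_of_one_lt₀ (Nat.one_lt_cast.2 hp.one_lt)
  have hprod :=
    (EulerProduct.summable_and_hasSum_factoredNumbers_prod_filter_prime_geometric hinv s).2
  rw [filter_true_of_mem hs] at hprod
  exact hasSum_subtype_iff_indicator.1 hprod

/-- The restriction of a `q`-periodic function to the integers all of whose prime factors divide
`q`, extended by zero. Okada's criterion concerns the value at `1` of its Dirichlet series. -/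
noncomputable def factoredPart (Φ : ZMod q → ℂ) : ℕ → ℂ :=
  (Nat.factoredNumbers q.primeFactors).indicator fun n ↦ Φ n

theorem term_factoredPart_one (Φ : ZMod q → ℂ) (n : ℕ) : LSeries.term (factoredPart Φ) 1 n =
    (Nat.factoredNumbers q.primeFactors).indicator (fun n ↦ Φ n * (n : ℂ)⁻¹) n := by
  rw [factoredPart]
  by_cases hn : n ∈ Nat.factoredNumbers q.primeFactors
  · rw [LSeries.term_of_ne_zero (Nat.ne_zero_of_mem_factoredNumbers hn),
      Set.indicator_of_mem hn, Set.indicator_of_mem hn, Complex.cpow_one, div_eq_mul_inv]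
  · simp [LSeries.term, Set.indicator_of_notMem hn]

variable [NeZero q]

theorem lseriesSummable_factoredPart_one (Φ : ZMod q → ℂ) :
    LSeriesSummable (factoredPart Φ) 1 := by
  have hinv := hasSum_indicator_factoredNumbers_inv fun p ↦ Nat.prime_of_mem_primeFactors (n := q)
  refine Summable.of_norm_bounded (hinv.summable.mul_left (∑ j, ‖Φ j‖)) fun n ↦ ?_
  rw [term_factoredPart_one]
  by_cases hn : n ∈ Nat.factoredNumbers q.primeFactors
  · rw [Set.indicator_of_mem hn, Set.indicator_of_mem hn, norm_mul, norm_inv, Complex.norm_natCast]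
    gcongr
    exact single_le_sum (f := fun j ↦ ‖Φ j‖) (fun _ _ ↦ norm_nonneg _) (mem_univ _)
  · simp [Set.indicator_of_notMem hn]

theorem tendsto_LSeries_nhdsGT_one {f : ℕ → ℂ} (hf : LSeriesSummable f 1) :
    Tendsto (fun s : ℝ ↦ LSeries f s) (𝓝[>] 1) (𝓝 (LSeries f 1)) := by
  refine tendsto_tsum_of_dominated_convergence hf.norm (fun n ↦ ?_) ?_
  · rcases eq_or_ne n 0 with rfl | hn
    · simp
    have hn' : (n : ℂ) ≠ 0 := Nat.cast_ne_zero.2 hn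
    have hcont : Continuous fun s : ℝ ↦ f n / (n : ℂ) ^ (s : ℂ) :=
      continuous_const.div (Complex.continuous_ofReal.const_cpow (Or.inl hn')) fun s ↦ by
        simp [Complex.cpow_eq_zero_iff, hn']
    simpa [LSeries.term_of_ne_zero hn] using (hcont.tendsto 1).mono_left nhdsWithin_le_nhds
  · filter_upwards [self_mem_nhdsWithin] with s hs n
    exact LSeries.norm_term_le_of_re_le_re _ (by simpa using le_of_lt hs) n

section Equivariant

variable {ψ : DirichletCharacter ℂ q} {Φ : ZMod q → ℂ}

theorem convolution_factoredPart (hΦ : ∀ (u : (ZMod q)ˣ) (j : ZMod q), Φ (u * j) = ψ u * Φ j)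
    {n : ℕ} (hn : n ≠ 0) : LSeries.convolution (fun n ↦ ψ n) (factoredPart Φ) n = Φ n := by
  obtain ⟨k, m, hk, hm, rfl⟩ := exists_coprime_mul_mem_factoredNumbers_eq (NeZero.ne q) hn
  rw [LSeries.convolution_def]
  simp only
  rw [sum_eq_single_of_mem (k, m) (by simp [hn])]
  · rw [factoredPart, Set.indicator_of_mem hm, ← ZMod.coe_unitOfCoprime k hk, ← hΦ,
      ZMod.coe_unitOfCoprime, Nat.cast_mul]
  rintro ⟨k', m'⟩ hkm' hne
  by_cases hk' : k'.Coprime q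
  · have hm' : m' ∉ Nat.factoredNumbers q.primeFactors := fun hm' ↦ by
      obtain ⟨rfl, rfl⟩ := eq_and_eq_of_coprime_mul_factoredNumbers hk hm hk' hm'
        (Nat.mem_divisorsAntidiagonal.1 hkm').1.symm
      exact hne rfl
    simp [factoredPart, Set.indicator_of_notMem hm']
  · simp [ψ.map_nonunit (mt (ZMod.isUnit_iff_coprime k' q).1 hk')]

theorem LFunction_eq_mul_LSeries_factoredPart
    (hΦ : ∀ (u : (ZMod q)ˣ) (j : ZMod q), Φ (u * j) = ψ u * Φ j) {s : ℝ} (hs : 1 < s) :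
    ZMod.LFunction Φ s = ψ.LFunction s * LSeries (factoredPart Φ) s := by
  have hre : 1 < (s : ℂ).re := by simpa using hs
  rw [ZMod.LFunction_eq_LSeries Φ hre, DirichletCharacter.LFunction_eq_LSeries ψ hre,
    ← LSeries_convolution' (DirichletCharacter.LSeriesSummable_of_one_lt_re ψ hre)
      ((lseriesSummable_factoredPart_one Φ).of_re_le_re (by simpa using hs.le))]
  exact LSeries_congr (fun hn ↦ (convolution_factoredPart hΦ hn).symm) _

theorem tendsto_ofReal_nhdsGT_one : Tendsto (fun s : ℝ ↦ (s : ℂ)) (𝓝[>] 1) (𝓝[≠] 1) := by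
  refine tendsto_nhdsWithin_iff.2 ⟨?_, ?_⟩
  · simpa using (Complex.continuous_ofReal.tendsto 1).mono_left nhdsWithin_le_nhds
  · filter_upwards [self_mem_nhdsWithin] with s hs
    simpa using ne_of_gt hs

theorem eq_zero_of_tendsto_dirichletLFunction_mul (ψ : DirichletCharacter ℂ q) {A : ℝ → ℂ} {a : ℂ}
    (hA : Tendsto A (𝓝[>] 1) (𝓝 a))
    (hmul : Tendsto (fun s : ℝ ↦ ψ.LFunction s * A s) (𝓝[>] 1) (𝓝 0)) : a = 0 := by
  by_cases hψ : ψ = 1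
  · subst hψ
    have hresidue := (DirichletCharacter.LFunctionTrivChar_residue_one (N := q)).comp
      tendsto_ofReal_nhdsGT_one
    have hsub := (tendsto_nhds_of_tendsto_nhdsWithin tendsto_ofReal_nhdsGT_one).sub_const 1
    have hlimit := tendsto_nhds_unique (hresidue.mul hA)
      ((hsub.mul hmul).congr fun s ↦ (mul_assoc _ _ _).symm)
    rw [mul_zero, mul_eq_zero, prod_eq_zero_iff] at hlimit
    refine hlimit.resolve_left fun ⟨p, hp, hzero⟩ ↦ (Nat.prime_of_mem_primeFactors hp).ne_one ?_
    exact_mod_cast inv_eq_one.1 (sub_eq_zero.1 hzero).symm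
  · have hL := ((DirichletCharacter.differentiable_LFunction hψ).continuous.tendsto 1).comp
      (tendsto_nhds_of_tendsto_nhdsWithin tendsto_ofReal_nhdsGT_one)
    exact (mul_eq_zero.1 (tendsto_nhds_unique (hL.mul hA) hmul)).resolve_left
      (DirichletCharacter.LFunction_apply_one_ne_zero hψ)

theorem LSeries_factoredPart_one_eq_zero_of_equivariant
    (hΦ : ∀ (u : (ZMod q)ˣ) (j : ZMod q), Φ (u * j) = ψ u * Φ j) (hsum : ∑ j, Φ j = 0)
    (hL : ZMod.LFunction Φ 1 = 0) : LSeries (factoredPart Φ) 1 = 0 := by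
  refine eq_zero_of_tendsto_dirichletLFunction_mul ψ
    (tendsto_LSeries_nhdsGT_one (lseriesSummable_factoredPart_one Φ)) ?_
  rw [← hL]
  refine (tendsto_LFunction_nhdsGT_one hsum).congr' ?_
  filter_upwards [self_mem_nhdsWithin] with s hs
  exact LFunction_eq_mul_LSeries_factoredPart hΦ hs

end Equivariant

/-- The component of `Φ` on which the units of `ZMod q` act by translation of the argument through
the character `χ⁻¹`, scaled by `φ(q)`. -/
noncomputable def isotypicPart (χ : DirichletCharacter ℂ q) (Φ : ZMod q → ℂ) (j : ZMod q) : ℂ :=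
  ∑ u : (ZMod q)ˣ, χ u * Φ (u * j)

variable (χ : DirichletCharacter ℂ q) {Φ : ZMod q → ℂ}

theorem isotypicPart_unit_mul (Φ : ZMod q → ℂ) (v : (ZMod q)ˣ) (j : ZMod q) :
    isotypicPart χ Φ (v * j) = χ⁻¹ v * isotypicPart χ Φ j := by
  have hχ : χ (v : ZMod q) ≠ 0 := (v.isUnit.map χ).ne_zero
  rw [isotypicPart, isotypicPart, mul_sum]
  refine Fintype.sum_equiv (Equiv.mulRight v) _ _ fun u ↦ ?_
  rw [Equiv.coe_mulRight, Units.val_mul, map_mul, MulChar.inv_apply_eq_inv', mul_assoc (u : ZMod q)]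
  field_simp

theorem sum_isotypicPart_eq_zero (hΦ : ∑ j, Φ j = 0) : ∑ j, isotypicPart χ Φ j = 0 := by
  simp only [isotypicPart]
  rw [sum_comm]
  exact sum_eq_zero fun u _ ↦ by rw [← mul_sum, sum_unit_mul, hΦ, mul_zero]

theorem LFunction_isotypicPart (Φ : ZMod q → ℂ) (s : ℂ) : ZMod.LFunction (isotypicPart χ Φ) s =
    ∑ u : (ZMod q)ˣ, χ u * ZMod.LFunction (fun j ↦ Φ ((u : ZMod q) * j)) s := by
  simp only [ZMod.LFunction, isotypicPart, mul_sum, sum_mul]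
  rw [sum_comm]
  exact sum_congr rfl fun u _ ↦ sum_congr rfl fun j _ ↦ by ring

theorem LSeries_factoredPart_isotypicPart (Φ : ZMod q → ℂ) :
    LSeries (factoredPart (isotypicPart χ Φ)) 1 =
      ∑ u : (ZMod q)ˣ, χ u * LSeries (factoredPart fun j ↦ Φ ((u : ZMod q) * j)) 1 := by
  have hlinear : factoredPart (isotypicPart χ Φ) =
      ∑ u : (ZMod q)ˣ, χ u • factoredPart fun j ↦ Φ ((u : ZMod q) * j) := by
    ext n
    by_cases hn : n ∈ Nat.factoredNumbers q.primeFactors <;>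
      simp [factoredPart, isotypicPart, hn]
  rw [hlinear, LSeries_sum fun u _ ↦ (lseriesSummable_factoredPart_one _).smul _]
  simp only [LSeries_smul]

theorem eq_zero_of_forall_sum_dirichletCharacter_mul_eq_zero {V : (ZMod q)ˣ → ℂ}
    (hV : ∀ χ : DirichletCharacter ℂ q, ∑ u : (ZMod q)ˣ, χ u * V u = 0) : V 1 = 0 := by
  have hsum : ∑ χ : DirichletCharacter ℂ q, ∑ u : (ZMod q)ˣ, χ u * V u = 0 :=
    sum_eq_zero fun χ _ ↦ hV χ
  rw [sum_comm] at hsum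
  simpa [← sum_mul, DirichletCharacter.sum_characters_eq, NeZero.ne q] using hsum

theorem LSeries_factoredPart_one_eq_zero (hΦ : ∑ j, Φ j = 0)
    (hL : ∀ u : (ZMod q)ˣ, ZMod.LFunction (fun j ↦ Φ ((u : ZMod q) * j)) 1 = 0) :
    LSeries (factoredPart Φ) 1 = 0 := by
  have hV := eq_zero_of_forall_sum_dirichletCharacter_mul_eq_zero
    (V := fun u : (ZMod q)ˣ ↦ LSeries (factoredPart fun j ↦ Φ ((u : ZMod q) * j)) 1) fun χ ↦ ?_
  · simpa using hV
  rw [← LSeries_factoredPart_isotypicPart]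
  refine LSeries_factoredPart_one_eq_zero_of_equivariant (isotypicPart_unit_mul χ Φ)
    (sum_isotypicPart_eq_zero χ hΦ) ?_
  rw [LFunction_isotypicPart]
  exact sum_eq_zero fun u _ ↦ by rw [hL, mul_zero]

end OkadaCriterion

section Totient

theorem prod_primeFactors_one_sub_inv_inv {q : ℕ} (hq : q ≠ 0) :
    ∏ p ∈ q.primeFactors, (1 - (p : ℝ)⁻¹)⁻¹ = q / q.totient := by
  have htotient : (q.totient : ℝ) = q * ∏ p ∈ q.primeFactors, (1 - (p : ℝ)⁻¹) := by
    simpa using congrArg (Rat.cast (K := ℝ)) (Nat.totient_eq_mul_prod_factors q)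
  rw [prod_inv_distrib, htotient, div_mul_cancel_left₀ (Nat.cast_ne_zero.2 hq)]

theorem one_sub_sum_le_prod_one_sub {ι R : Type*} [CommRing R] [LinearOrder R]
    [IsStrictOrderedRing R] {s : Finset ι} {x : ι → R} (hx₀ : ∀ i ∈ s, 0 ≤ x i)
    (hx₁ : ∀ i ∈ s, x i ≤ 1) : 1 - ∑ i ∈ s, x i ≤ ∏ i ∈ s, (1 - x i) := by
  induction s using Finset.cons_induction with
  | empty => simp
  | cons a s ha ih =>
    rw [forall_mem_cons] at hx₀ hx₁
    rw [sum_cons, prod_cons]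
    have hsum : 0 ≤ x a * ∑ i ∈ s, x i := mul_nonneg hx₀.1 (sum_nonneg hx₀.2)
    calc 1 - (x a + ∑ i ∈ s, x i) ≤ (1 - x a) * (1 - ∑ i ∈ s, x i) := by linarith
      _ ≤ (1 - x a) * ∏ i ∈ s, (1 - x i) :=
        mul_le_mul_of_nonneg_left (ih hx₀.2 hx₁.2) (sub_nonneg.2 hx₁.1)

theorem two_mul_card_primeFactors_le_card_divisors {q : ℕ} (hq : q ≠ 0) :
    2 * q.primeFactors.card ≤ q.divisors.card := by
  calc 2 * q.primeFactors.card ≤ 2 ^ q.primeFactors.card := by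
        rcases q.primeFactors.card with _ | w
        · simp
        · rw [pow_succ']
          exact Nat.mul_le_mul_left 2 (Nat.succ_le_of_lt w.lt_two_pow_self)
    _ ≤ q.divisors.card := by
        rw [Nat.card_divisors hq, ← prod_const]
        exact prod_le_prod' fun p hp ↦ Nat.succ_le_succ (Nat.one_le_iff_ne_zero.2
          (Finsupp.mem_support_iff.1 (by rwa [Nat.support_factorization])))

theorem sum_primeFactors_inv_le_card_div_minFac (q : ℕ) :
    ∑ p ∈ q.primeFactors, (p : ℝ)⁻¹ ≤ q.primeFactors.card / q.minFac := by
  rw [div_eq_mul_inv, ← nsmul_eq_mul]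
  refine sum_le_card_nsmul _ _ _ fun p hp ↦ ?_
  exact inv_anti₀ (Nat.cast_pos.2 q.minFac_pos) (Nat.cast_le.2 (Nat.minFac_le_of_dvd
    (Nat.prime_of_mem_primeFactors hp).two_le (Nat.dvd_of_mem_primeFactors hp)))

theorem le_two_mul_totient_of_card_divisors_le_minFac {q : ℕ}
    (h : q.divisors.card ≤ q.minFac) : q ≤ 2 * q.totient := by
  rcases eq_or_ne q 0 with rfl | hq
  · simp
  have hcard : (2 * q.primeFactors.card : ℝ) ≤ q.minFac :=
    mod_cast (two_mul_card_primeFactors_le_card_divisors hq).trans h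
  have hminFac : (0 : ℝ) < q.minFac := Nat.cast_pos.2 q.minFac_pos
  have hsum : ∑ p ∈ q.primeFactors, (p : ℝ)⁻¹ ≤ 1 / 2 :=
    (sum_primeFactors_inv_le_card_div_minFac q).trans <| by
      rw [div_le_div_iff₀ hminFac two_pos]
      linarith
  have hprod : 1 / 2 ≤ ∏ p ∈ q.primeFactors, (1 - (p : ℝ)⁻¹) :=
    (by linarith : (1 / 2 : ℝ) ≤ 1 - ∑ p ∈ q.primeFactors, (p : ℝ)⁻¹).trans <|
      one_sub_sum_le_prod_one_sub (fun p _ ↦ by positivity) fun p _ ↦ Nat.cast_inv_le_one p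
  have hquot : (q : ℝ) / q.totient ≤ 2 := by
    rw [← prod_primeFactors_one_sub_inv_inv hq, prod_inv_distrib]
    exact inv_le_of_inv_le₀ two_pos (by simpa using hprod)
  rw [div_le_iff₀ (Nat.cast_pos.2 (Nat.totient_pos.2 hq.bot_lt))] at hquot
  exact_mod_cast hquot

end Totient

section Erdosian

variable {q : ℕ} [NeZero q]

-- The terms `m = 1` and `m = q` are subtracted from `∑ 1 / m = q / φ(q)`.
theorem norm_LSeries_factoredPart_one_sub_le (hq : 1 < q) {Φ : ZMod q → ℂ}
    (hΦ : ∀ j, ‖Φ j‖ ≤ 1) (hΦ₀ : Φ 0 = 0) :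
    ‖LSeries (factoredPart Φ) 1 - Φ 1‖ ≤ q / q.totient - 1 - (q : ℝ)⁻¹ := by
  have hseries := (lseriesSummable_factoredPart_one Φ).hasSum.sub (hasSum_ite_eq (1 : ℕ) (Φ 1))
  have hinv := hasSum_indicator_factoredNumbers_inv fun p ↦ Nat.prime_of_mem_primeFactors (n := q)
  rw [prod_primeFactors_one_sub_inv_inv (NeZero.ne q)] at hinv
  refine hseries.norm_le_of_bounded
    ((hinv.sub (hasSum_ite_eq 1 1)).sub (hasSum_ite_eq q (q : ℝ)⁻¹)) fun n ↦ ?_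
  rw [term_factoredPart_one]
  have h1_mem : 1 ∈ Nat.factoredNumbers q.primeFactors := by simp [Nat.mem_factoredNumbers]
  have hq_mem : q ∈ Nat.factoredNumbers q.primeFactors :=
    Nat.mem_factoredNumbers_of_primeFactors_subset (NeZero.ne q) subset_rfl
  rcases eq_or_ne n 1 with rfl | hn1
  · simp [Set.indicator_of_mem h1_mem, hq.ne]
  rcases eq_or_ne n q with rfl | hnq
  · simp [Set.indicator_of_mem hq_mem, hn1, hΦ₀]
  by_cases hn : n ∈ Nat.factoredNumbers q.primeFactors
  · simpa [Set.indicator_of_mem hn, hn1, hnq] using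
      mul_le_of_le_one_left (by positivity) (hΦ n)
  · simp [Set.indicator_of_notMem hn, hn1, hnq]

theorem LSeries_factoredPart_one_ne_zero (hq : 1 < q) (htotient : q ≤ 2 * q.totient)
    {Φ : ZMod q → ℂ} (hΦ : ∀ j, ‖Φ j‖ ≤ 1) (hΦ₀ : Φ 0 = 0) (hΦ₁ : ‖Φ 1‖ = 1) :
    LSeries (factoredPart Φ) 1 ≠ 0 := by
  intro hzero
  have hle := norm_LSeries_factoredPart_one_sub_le hq hΦ hΦ₀
  rw [hzero, zero_sub, norm_neg, hΦ₁] at hle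
  have hquot : (q : ℝ) / q.totient ≤ 2 :=
    (div_le_iff₀ (Nat.cast_pos.2 (Nat.totient_pos.2 (NeZero.pos q)))).2 (mod_cast htotient)
  have hinv : 0 < (q : ℝ)⁻¹ := inv_pos.2 (Nat.cast_pos.2 (NeZero.pos q))
  linarith

theorem LSeries_factoredPart_one_eq_zero_of_tendsto {F : ZMod q → ℚ}
    (hF : Tendsto (fun N : ℕ ↦ ∑ n ∈ Icc 1 N, (F n : ℂ) / n) atTop (𝓝 0)) :
    LSeries (factoredPart fun j ↦ (F j : ℂ)) 1 = 0 := by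
  have hsum : ∑ j, (F j : ℂ) = 0 := sum_eq_zero_of_tendsto_sum_div (Φ := fun j ↦ (F j : ℂ)) hF
  exact LSeries_factoredPart_one_eq_zero hsum <| LFunction_unit_mul_one_eq_zero hsum <|
    tendsto_nhds_unique (tendsto_sum_div_LFunction_one hsum) hF

theorem exists_zmod_lift_of_isErdosian {f : ℕ → ℤ} (hf : IsErdosian q f) :
    ∃ F : ZMod q → ℤ, (∀ n : ℕ, 1 ≤ n → F n = f n) ∧ F 0 = 0 ∧ ∀ j ≠ 0, |F j| = 1 := by
  obtain ⟨hper, hsign, hzero⟩ := hf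
  have hshift : Function.Periodic (fun n ↦ f (n + q)) q := fun n ↦
    hper (n + q) (NeZero.one_le.trans (Nat.le_add_left _ _))
  have hlift (n : ℕ) (hn : 1 ≤ n) : f ((n : ZMod q).val + q) = f n := by
    rw [ZMod.val_natCast, hshift.map_mod_nat, hper n hn]
  refine ⟨fun j ↦ f (j.val + q), hlift, ?_, fun j hj ↦ ?_⟩
  · simpa using hzero q NeZero.one_le dvd_rfl
  · have hval : j.val ≠ 0 := (ZMod.val_ne_zero j).2 hj
    have hdvd : ¬q ∣ j.val := Nat.not_dvd_of_pos_of_lt hval.bot_lt j.val_lt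
    beta_reduce
    rw [hper _ hval.bot_lt]
    rcases hsign _ hval.bot_lt hdvd with h | h <;> simp [h]

end Erdosian

theorem erdos_true_minFac_ge_numDivisors_general (q : ℕ) (hq : 1 < q)
    (htotient : q ≤ 2 * q.totient) : ErdosConjectureHolds q := by
  rintro ⟨f, hf, hlim⟩
  have : NeZero q := ⟨by omega⟩
  have : Fact (1 < q) := ⟨hq⟩
  obtain ⟨F, hFf, hF₀, hF⟩ := exists_zmod_lift_of_isErdosian hf
  have hlimF : Tendsto (fun N : ℕ ↦ ∑ n ∈ Icc 1 N, ((F n : ℚ) : ℂ) / n) atTop (𝓝 0) := by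
    refine ((Complex.continuous_ofReal.tendsto' 0 0 rfl).comp hlim).congr fun N ↦ ?_
    rw [Function.comp_apply, Complex.ofReal_sum]
    exact sum_congr rfl fun n hn ↦ by simp [hFf n (mem_Icc.1 hn).1]
  have hnorm (j : ZMod q) (hj : j ≠ 0) : ‖((F j : ℚ) : ℂ)‖ = 1 := by
    rw [Rat.cast_intCast, Complex.norm_intCast]
    exact_mod_cast hF j hj
  have hnorm_le (j : ZMod q) : ‖((F j : ℚ) : ℂ)‖ ≤ 1 := by
    rcases eq_or_ne j 0 with rfl | hj
    · simp [hF₀]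
    · exact (hnorm j hj).le
  exact LSeries_factoredPart_one_ne_zero hq htotient hnorm_le (by simp [hF₀])
    (hnorm 1 one_ne_zero) (LSeries_factoredPart_one_eq_zero_of_tendsto (F := fun j ↦ F j) hlimF)

theorem erdos_true_minFac_ge_numDivisors (q : ℕ) (hq : 1 < q) (hodd : Odd q)
    (h : q.divisors.card ≤ q.minFac) :
    ErdosConjectureHolds q :=
  erdos_true_minFac_ge_numDivisors_general q hq (le_two_mul_totient_of_card_divisors_le_minFac h)
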